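/- Let α ≤ β ≤ −1 be negative integers, let M = (M_i)_{i≥0} be real parameters with M_i ∉ {0,1}, and let F be a finite set of positive integers with {−β, …, −α−β−1} ⊆ F. Assume Ω_{M,F}^{α,β}(x) ≠ 0 for all x ∈ [−1,1]. Then for every n ∈ ℕ with n ∉ F, the squared L²-norm ∫_{−1}^{1} (P_{n+u_F}^{α,β;M,F}(x))² · (1−x)^{α+n_F}(1+x)^{β+n_F}/(Ω_{M,F}^{α,β}(x))² dx equals 2^{α+β+1}·ϱ_n^M·(∏_{f∈F}(n−f))·(∏_{u∈U_F}(n+u+1))·∏_{i=1}^{−α}(n+α+β+i) / (2n+α+β+1), where ϱ_n^M = −(1−M_{−β−1−n})²/M_{−β−1−n} if 0 ≤ n ≤ −β−1 and ϱ_n^M = 1 otherwise, and U_F = {f+α+β : f ∈ F, 1 ≤ f ≤ −β−1} ∪ {f+α+β : f ∈ F, f ≥ −α−β}. -/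

import Mathlib

open Finset MeasureTheory

noncomputable section ExceptionalHahnJacobi

/-- Pochhammer symbol `(z)_m = z (z+1) ⋯ (z+m-1)`. -/
def poch (z : ℝ) (m : ℕ) : ℝ := ∏ i ∈ Finset.range m, (z + (i : ℝ))

/-- Pochhammer symbol with integer exponent; `(z)_{-k} = 1 / ((z-1)(z-2)⋯(z-k))`. -/
def pochZ (z : ℝ) (m : ℤ) : ℝ :=
  if 0 ≤ m then poch z m.toNat else 1 / poch (z - ((-m).toNat : ℝ)) (-m).toNat

/-- Generalized binomial coefficient `C(z, k) = z(z-1)⋯(z-k+1)/k!`. -/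
def genBinom (z : ℝ) (k : ℕ) : ℝ := (∏ i ∈ Finset.range k, (z - (i : ℝ))) / (k.factorial : ℝ)

/-- `λ^{a,b}(x) = x (x + a + b + 1)`. -/
def lam (a b x : ℝ) : ℝ := x * (x + a + b + 1)

/-- Hahn polynomial `h_n^{a,b,N}(x)`. -/
def hahn (a b N : ℝ) (n : ℕ) (x : ℝ) : ℝ :=
  ∑ j ∈ Finset.range (n + 1),
    poch (-(n : ℝ)) j * poch (a + b + (n : ℝ) + 1) j * poch (-N + (j : ℝ)) (n - j) *
      poch (a + (j : ℝ) + 1) (n - j) * poch (-x) j / (j.factorial : ℝ)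

/-- Dual Hahn polynomial `R_n^{a,b,N}(x)`. -/
def dualHahn (a b N : ℝ) (n : ℕ) (x : ℝ) : ℝ :=
  ∑ j ∈ Finset.range (n + 1),
    poch (-(n : ℝ)) j * poch (-N + (j : ℝ)) (n - j) * poch (a + (j : ℝ) + 1) (n - j) /
        ((n.factorial : ℝ) * (-1 : ℝ) ^ j * (j.factorial : ℝ)) *
      ∏ i ∈ Finset.range j, (x - (i : ℝ) * (a + b + 1 + (i : ℝ)))

/-- Dual Hahn polynomial with integer degree; zero for negative degree. -/
def dualHahnZ (a b N : ℝ) (m : ℤ) (x : ℝ) : ℝ :=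
  if 0 ≤ m then dualHahn a b N m.toNat x else 0

/-- Jacobi polynomial `P_n^{a,b}(x)`. -/
def jacobiP (a b : ℝ) (n : ℕ) (x : ℝ) : ℝ :=
  (2 : ℝ)⁻¹ ^ n * ∑ j ∈ Finset.range (n + 1),
    genBinom ((n : ℝ) + a) j * genBinom ((n : ℝ) + b) (n - j) * (x - 1) ^ (n - j) * (x + 1) ^ j

/-- The function `φ_u^{α,β,N}(s,x)`, a normalized terminating ₃F₂. -/
def phiH (α β : ℤ) (N : ℝ) (u : ℕ) (s x : ℝ) : ℝ :=
  poch ((α : ℝ) + 1) (max u (-α - β - (u : ℤ) - 1).toNat) *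
    poch (-N) (max u (-α - β - (u : ℤ) - 1).toNat) *
    ∑ j ∈ Finset.range (u + 1),
      poch (-(u : ℝ)) j * poch ((u : ℝ) - s + (α : ℝ) + (β : ℝ) + 1) j * poch (-x) j /
        (poch ((α : ℝ) - s + 1) j * poch (-N) j * (j.factorial : ℝ))

/-- The polynomials `Ĥ_n^{α,β,N;M}(x)`. -/
def Hhat (α β : ℤ) (N : ℝ) (M : ℕ → ℝ) (n : ℕ) (x : ℝ) : ℝ :=
  if ⌈((-α - β : ℤ) : ℚ) / 2⌉ ≤ (n : ℤ) ∧ (n : ℤ) ≤ -α - 1 then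
    deriv (fun s => phiH α β N n s x) 0 -
      deriv (fun s => phiH α β N (-α - β - (n : ℤ) - 1).toNat s x) 0
  else if -α ≤ (n : ℤ) ∧ (n : ℤ) ≤ -α - β - 1 then
    (-1 : ℝ) ^ ((β : ℤ) + (n : ℤ)) * ((β + (n : ℤ)).toNat.factorial : ℝ) *
      (((-α - β - (n : ℤ) - 1).toNat.factorial : ℝ) * poch (-x) (-α).toNat *
          hahn (-(α : ℝ)) (β : ℝ) ((α : ℝ) + N) ((α + (n : ℤ)).toNat) (x + (α : ℝ)) +
        (((α + (n : ℤ)).toNat.factorial : ℝ)) *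
            poch (-N - (α : ℝ) - (β : ℝ) - (n : ℝ) - 1) (2 * (n : ℤ) + α + β + 1).toNat /
            (M ((α + (n : ℤ)).toNat) - 1) *
          hahn (α : ℝ) (β : ℝ) N ((-α - β - (n : ℤ) - 1).toNat) x)
  else hahn (α : ℝ) (β : ℝ) N n x

/-- The function `φ_u^{α,β}(s,x)`, a normalized terminating ₂F₁. -/
def phiJ (α β : ℤ) (u : ℕ) (s x : ℝ) : ℝ :=
  poch ((α : ℝ) + 1) (max u (-α - β - (u : ℤ) - 1).toNat) /
      ((max u.factorial (-α - β - (u : ℤ) - 1).toNat.factorial : ℕ) : ℝ) *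
    ∑ j ∈ Finset.range (u + 1),
      poch (-(u : ℝ)) j * poch ((u : ℝ) - s + (α : ℝ) + (β : ℝ) + 1) j /
          (poch ((α : ℝ) - s + 1) j * (j.factorial : ℝ)) * ((1 - x) / 2) ^ j

/-- The polynomials `P̂_n^{α,β;M}(x)`. -/
def Phat (α β : ℤ) (M : ℕ → ℝ) (n : ℕ) (x : ℝ) : ℝ :=
  if ⌈((-α - β : ℤ) : ℚ) / 2⌉ ≤ (n : ℤ) ∧ (n : ℤ) ≤ -α - 1 then
    deriv (fun s => phiJ α β n s x) 0 -
      deriv (fun s => phiJ α β (-α - β - (n : ℤ) - 1).toNat s x) 0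
  else if -α ≤ (n : ℤ) ∧ (n : ℤ) ≤ -α - β - 1 then
    (-1 : ℝ) ^ ((β : ℤ) + (n : ℤ)) *
      ((((n : ℤ) + α).toNat.factorial : ℝ) * (((n : ℤ) + β).toNat.factorial : ℝ) *
        ((-α - β - (n : ℤ) - 1).toNat.factorial : ℝ)) / (n.factorial : ℝ) *
      ((M ((α + (n : ℤ)).toNat) - 1)⁻¹ * jacobiP (α : ℝ) (β : ℝ) ((-α - β - (n : ℤ) - 1).toNat) x +
        ((1 - x) / 2) ^ (-α).toNat * jacobiP (-(α : ℝ)) (β : ℝ) ((α + (n : ℤ)).toNat) x)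
  else jacobiP (α : ℝ) (β : ℝ) n x

/-- `u_F = Σ_{f ∈ F} f - C(n_F + 1, 2)`. -/
def uF (F : Finset ℕ) : ℕ := (∑ f ∈ F, f) - (F.card + 1).choose 2

/-- `n ∈ σ_F = {u_F, u_F + 1, …} \ {u_F + f : f ∈ F}`. -/
def inSigma (F : Finset ℕ) (n : ℕ) : Prop := uF F ≤ n ∧ n - uF F ∉ F

/-- The `i`-th element of `F` in increasing order. -/
def elemOf (F : Finset ℕ) (i : Fin F.card) : ℕ := ((F.orderIsoOfFin rfl i : {x // x ∈ F}) : ℕ)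

/-- The `i`-th element of a finite set of integers, in increasing order. -/
def elemOfZ (S : Finset ℤ) (i : Fin S.card) : ℤ := ((S.orderIsoOfFin rfl i : {x // x ∈ S}) : ℤ)

/-- Exceptional Hahn polynomial `h_n^{α,β,N;M,F}(x)`. -/
def exHahn (α β : ℤ) (N : ℝ) (M : ℕ → ℝ) (F : Finset ℕ) (n : ℕ) (x : ℝ) : ℝ :=
  Matrix.det (Matrix.of fun i j : Fin (F.card + 1) =>
    Fin.cases (Hhat α β N M (n - uF F) (x + ((j : ℕ) : ℝ)))
      (fun k => Hhat α β N M (elemOf F k) (x + ((j : ℕ) : ℝ))) i)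

/-- The polynomial `Ω_{M,F}^{α,β,N}(x)`. -/
def OmegaH (α β : ℤ) (N : ℝ) (M : ℕ → ℝ) (F : Finset ℕ) (x : ℝ) : ℝ :=
  Matrix.det (Matrix.of fun i j : Fin F.card =>
    Hhat α β N M (elemOf F i) (x + ((j : ℕ) : ℝ)))

/-- The polynomial `Λ_{M,F}^{α,β,N}(x)` (columns `j ∈ {1,…,n_F+1}`, `j ≠ n_F`). -/
def LambdaH (α β : ℤ) (N : ℝ) (M : ℕ → ℝ) (F : Finset ℕ) (x : ℝ) : ℝ :=
  Matrix.det (Matrix.of fun i j : Fin F.card =>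
    Hhat α β N M (elemOf F i)
      (x + ((if (j : ℕ) = F.card - 1 then F.card else (j : ℕ) : ℕ) : ℝ)))

/-- Exceptional Jacobi polynomial `P_n^{α,β;M,F}(x)`. -/
def exJacobi (α β : ℤ) (M : ℕ → ℝ) (F : Finset ℕ) (n : ℕ) (x : ℝ) : ℝ :=
  Matrix.det (Matrix.of fun i j : Fin (F.card + 1) =>
    Fin.cases (iteratedDeriv (j : ℕ) (Phat α β M (n - uF F)) x)
      (fun k => iteratedDeriv (j : ℕ) (Phat α β M (elemOf F k)) x) i)

/-- The polynomial `Ω_{M,F}^{α,β}(x)`. -/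
def OmegaJ (α β : ℤ) (M : ℕ → ℝ) (F : Finset ℕ) (x : ℝ) : ℝ :=
  Matrix.det (Matrix.of fun i j : Fin F.card =>
    iteratedDeriv (j : ℕ) (Phat α β M (elemOf F i)) x)

/-- `F_ext = F \ {-β, …, -α-β-1}`. -/
def Fext (α β : ℤ) (F : Finset ℕ) : Finset ℕ :=
  F.filter fun f : ℕ => ((f : ℤ) < -β ∨ -α - β ≤ (f : ℤ))

/-- Admissibility of the data `α, β, M, F`. -/
def IsAdmissible (α β : ℤ) (M : ℕ → ℝ) (F : Finset ℕ) : Prop :=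
  (∀ i : ℕ, (i : ℤ) ≤ -β - 1 → (∀ f ∈ F, (i : ℤ) ≠ -β - (f : ℤ) - 1) →
      Real.sign (M i) =
        Real.sign (∏ f ∈ Fext α β F, (((i : ℝ) - (f : ℝ) - (α : ℝ)) * ((i : ℝ) + (f : ℝ) + (β : ℝ) + 1)))) ∧
  (∀ x : ℤ, 0 ≤ x → (∃ f ∈ F, x ≤ (f : ℤ) + α + β) →
      0 ≤ ∏ f ∈ F.filter (fun f : ℕ => -α - β ≤ (f : ℤ)), (x - (f : ℤ) - α - β))

/-- `U_{F-} = {f + α + β : f ∈ F, 1 ≤ f ≤ -β-1}`. -/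
def UFm (α β : ℤ) (F : Finset ℕ) : Finset ℤ :=
  (F.filter fun f : ℕ => (1 ≤ f ∧ (f : ℤ) ≤ -β - 1)).image fun f : ℕ => (f : ℤ) + α + β

/-- `U_{F+} = {f + α + β : f ∈ F, f ≥ -α-β}`. -/
def UFp (α β : ℤ) (F : Finset ℕ) : Finset ℤ :=
  (F.filter fun f : ℕ => -α - β ≤ (f : ℤ)).image fun f : ℕ => (f : ℤ) + α + β

/-- `U_F = U_{F-} ∪ U_{F+}`. -/
def UF (α β : ℤ) (F : Finset ℕ) : Finset ℤ := UFm α β F ∪ UFp α β F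

/-- The weight of the measure `ω_{α,β,N}^{M,F}` at the point `x`. -/
def wH (α β : ℤ) (N : ℕ) (M : ℕ → ℝ) (F : Finset ℕ) (x : ℕ) : ℝ :=
  genBinom ((α : ℝ) + (F.card : ℝ) + (x : ℝ)) x *
      genBinom ((β : ℝ) + (N : ℝ) - (x : ℝ)) (N - F.card - x) /
    (OmegaH α β (N : ℝ) M F (x : ℝ) * OmegaH α β (N : ℝ) M F ((x : ℝ) + 1))

/-- The weight `ω_{α,β;M,F}(x)` on `[-1,1]`. -/
def wJ (α β : ℤ) (M : ℕ → ℝ) (F : Finset ℕ) (x : ℝ) : ℝ :=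
  (1 - x) ^ (α + (F.card : ℤ)) * (1 + x) ^ (β + (F.card : ℤ)) / (OmegaJ α β M F x) ^ 2

/-- The measure on `[-1,1]` with density `ω_{α,β;M,F}`. -/
def jacobiMeasure (α β : ℤ) (M : ℕ → ℝ) (F : Finset ℕ) : Measure ℝ :=
  (volume.restrict (Set.Icc (-1 : ℝ) 1)).withDensity fun x => ENNReal.ofReal (wJ α β M F x)

/-- Mass of the dual Hahn measure `ρ_{b,a,N̂}` at `λ^{a,b}(x)`. -/
def rhoMass (a b Nh : ℤ) (x : ℕ) : ℝ :=
  (2 * (x : ℝ) + (a : ℝ) + (b : ℝ) + 1) * poch ((b : ℝ) + 1) x * poch (-(Nh : ℝ)) x *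
      (Nh.toNat.factorial : ℝ) /
    ((-1 : ℝ) ^ x * poch ((x : ℝ) + (a : ℝ) + (b : ℝ) + 1) (Nh + 1).toNat *
      poch ((a : ℝ) + 1) x * (x.factorial : ℝ))

/-- Mass of the measure `ν_{a,b,N̂}^{M}` at `λ^{a,b}(s)`. -/
def nuMass (a b Nh : ℤ) (M : ℕ → ℝ) (s : ℤ) : ℝ :=
  if -b ≤ s ∧ s ≤ -1 then
    (2 * (s : ℝ) + (a : ℝ) + (b : ℝ) + 1) * poch ((Nh : ℝ) + 1 - (s : ℝ)) (s + b).toNat /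
        poch ((Nh : ℝ) + (b : ℝ) + 1) (s + a + 1).toNat * M ((s + b).toNat)
  else if 0 ≤ s ∧ s ≤ Nh then
    poch ((Nh : ℝ) + 1) b.toNat ^ 2 / poch ((b : ℝ) + 1) (a - b).toNat * rhoMass a b Nh s.toNat /
      ∏ i ∈ Finset.range b.toNat, (((s : ℝ) + (a : ℝ) + (i : ℝ) + 1) * ((s : ℝ) + (b : ℝ) - (i : ℝ)))
  else 0

/-- `ζ_v` (defined for any integer `v` via `pochZ`). -/
def zetaH (α β : ℤ) (N : ℝ) (v : ℤ) : ℝ :=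
  pochZ (-N - (α : ℝ) - (β : ℝ)) v * poch ((v : ℝ) + 1) (-α).toNat *
    ((v - α - β).toNat.factorial : ℝ)

/-- `θ_v^M`. -/
def thetaM (β : ℤ) (M : ℕ → ℝ) (v : ℕ) : ℝ :=
  if (v : ℤ) ≤ -β - 1 then 1 - M ((-β - 1 - (v : ℤ)).toNat) else 1

/-- `τ_v = ∏_{u ∈ U_F} (λ^{a,b}(v+α+β) - λ^{a,b}(u))` with `a = -α`, `b = -β`. -/
def tauH (α β : ℤ) (F : Finset ℕ) (v : ℕ) : ℝ :=
  ∏ u ∈ UF α β F,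
    (lam ((-α : ℤ) : ℝ) ((-β : ℤ) : ℝ) ((v : ℝ) + (α : ℝ) + (β : ℝ)) -
      lam ((-α : ℤ) : ℝ) ((-β : ℤ) : ℝ) ((u : ℤ) : ℝ))

/-- `ξ_n`. -/
def xiH (α β : ℤ) (N : ℝ) (F : Finset ℕ) (n : ℕ) : ℝ :=
  pochZ (N - (n : ℝ) + 1) ((n : ℤ) + α + β) ^ (α + (F.card : ℤ) + 1) *
    ∏ j ∈ Finset.range (F.card + 1), poch (N - (n : ℝ) - (j : ℝ) + 1) j

/-- `κ_M`. -/
def kappaM (α β : ℤ) (N : ℝ) (M : ℕ → ℝ) (F : Finset ℕ) : ℝ :=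
  (∏ u ∈ UFm α β F, (1 - M ((-u + α - 1).toNat))) * ∏ u ∈ UF α β F, zetaH α β N u

/-- Entry `(i,j)` (0-based) of the determinant defining `q_n^{a,b,N̂;M,U_F}`. -/
def qEntry (α β : ℤ) (N : ℝ) (M : ℕ → ℝ) (F : Finset ℕ) (n : ℕ) (x : ℝ) (i j : ℕ) : ℝ :=
  if i = 0 then
    (-1 : ℝ) ^ j * dualHahnZ (((-α).toNat : ℝ)) (((-β).toNat : ℝ)) (N + (α : ℝ) + (β : ℝ))
      ((n : ℤ) - (-α).toNat + j) x
  else if h1 : i - 1 < (UFm α β F).card then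
    (-1 : ℝ) ^ j * dualHahnZ (((-α).toNat : ℝ)) (((-β).toNat : ℝ)) (N + (α : ℝ) + (β : ℝ))
      ((n : ℤ) - (-α).toNat + j)
      (lam (((-α).toNat : ℝ)) (((-β).toNat : ℝ)) ((elemOfZ (UFm α β F) ⟨i - 1, h1⟩ : ℤ) : ℝ))
  else if i - 1 - (UFm α β F).card < (-α).toNat then
    poch (((-α).toNat : ℝ) + ((-β).toNat : ℝ) + (N + (α : ℝ) + (β : ℝ)) - (n : ℝ) - (j : ℝ) + 1) j *
      Hhat α β (-2 - (N + (α : ℝ) + (β : ℝ))) M ((-β).toNat + (i - 1 - (UFm α β F).card))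
        (-(n : ℝ) + ((-α).toNat : ℝ) - (j : ℝ) - 1)
  else if h3 : i - 1 - (UFm α β F).card - (-α).toNat < (UFp α β F).card then
    (-1 : ℝ) ^ j * dualHahnZ (((-α).toNat : ℝ)) (((-β).toNat : ℝ)) (N + (α : ℝ) + (β : ℝ))
      ((n : ℤ) - (-α).toNat + j)
      (lam (((-α).toNat : ℝ)) (((-β).toNat : ℝ))
        ((elemOfZ (UFp α β F) ⟨i - 1 - (UFm α β F).card - (-α).toNat, h3⟩ : ℤ) : ℝ))
  else 0

/-- The Krall dual Hahn orthogonal polynomial `q_n^{a,b,N̂;M,U_F}(x)`. -/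
def qKrall (α β : ℤ) (N : ℝ) (M : ℕ → ℝ) (F : Finset ℕ) (n : ℕ) (x : ℝ) : ℝ :=
  Matrix.det (Matrix.of fun i j : Fin (1 + (UFm α β F).card + (-α).toNat + (UFp α β F).card) =>
      qEntry α β N M F n x (i : ℕ) (j : ℕ)) /
    ((-1 : ℝ) ^ ((n + (-α).toNat + (-β).toNat) * ((UF α β F).card + 1) +
        ((-α).toNat + (-β).toNat).choose 2 + ((-β).toNat).choose 2 + (-α).toNat) *
      ∏ u ∈ UF α β F, (x - lam (((-α).toNat : ℝ)) (((-β).toNat : ℝ)) ((u : ℤ) : ℝ)))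

/-- Row used in the renormalized determinant `P̄`: for `-α ≤ g ≤ -α-β-1` it is
`(M_{α+g} - 1) · P̂_g` written without the division by `M_{α+g} - 1`. -/
def PhatBarRow (α β : ℤ) (M : ℕ → ℝ) (g : ℕ) (x : ℝ) : ℝ :=
  if -α ≤ (g : ℤ) ∧ (g : ℤ) ≤ -α - β - 1 then
    (-1 : ℝ) ^ ((β : ℤ) + (g : ℤ)) *
      ((((g : ℤ) + α).toNat.factorial : ℝ) * (((g : ℤ) + β).toNat.factorial : ℝ) *
        ((-α - β - (g : ℤ) - 1).toNat.factorial : ℝ)) / (g.factorial : ℝ) *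
      (jacobiP (α : ℝ) (β : ℝ) ((-α - β - (g : ℤ) - 1).toNat) x +
        (M ((α + (g : ℤ)).toNat) - 1) * ((1 - x) / 2) ^ (-α).toNat *
          jacobiP (-(α : ℝ)) (β : ℝ) ((α + (g : ℤ)).toNat) x)
  else Phat α β M g x

/-- The renormalized exceptional Jacobi polynomial
`P̄_n^{α,β;M,F} = (∏_{i=0}^{-β-1} (M_i - 1)) · P_n^{α,β;M,F}`
(written so that the factors `M_i - 1` are distributed into the corresponding rows of the
determinant; this agrees with the product formula whenever all `M_i ≠ 1`). -/
def Pbar (α β : ℤ) (M : ℕ → ℝ) (F : Finset ℕ) (n : ℕ) (x : ℝ) : ℝ :=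
  (∏ i ∈ (Finset.range (-β).toNat).filter
      (fun i : ℕ => (((i : ℤ) - α).toNat ∉ F ∧ ((i : ℤ) - α).toNat ≠ n - uF F)), (M i - 1)) *
    Matrix.det (Matrix.of fun r j : Fin (F.card + 1) =>
      Fin.cases (iteratedDeriv (j : ℕ) (PhatBarRow α β M (n - uF F)) x)
        (fun k => iteratedDeriv (j : ℕ) (PhatBarRow α β M (elemOf F k)) x) r)

end ExceptionalHahnJacobi

noncomputable section ejone
open Polynomial


abbrev EJK := FractionRing ℝ[X]

def ejLiftBase : ℝ[X] →+* DualNumber EJK where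
  toFun r := TrivSqZeroExt.inl (algebraMap ℝ[X] EJK r) +
    TrivSqZeroExt.inr (algebraMap ℝ[X] EJK (derivative r))
  map_one' := by
    apply TrivSqZeroExt.ext <;> simp
  map_mul' x y := by
    apply TrivSqZeroExt.ext
    · simp
    · simp only [TrivSqZeroExt.snd_add, TrivSqZeroExt.snd_inl, TrivSqZeroExt.snd_inr, zero_add, TrivSqZeroExt.snd_mul, TrivSqZeroExt.fst_add, TrivSqZeroExt.fst_inl, TrivSqZeroExt.fst_inr, add_zero, derivative_mul, derivative_add, map_mul, map_add, smul_eq_mul, MulOpposite.smul_eq_mul_unop, MulOpposite.unop_op]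
      ring
  map_zero' := by
    apply TrivSqZeroExt.ext <;> simp
  map_add' x y := by
    apply TrivSqZeroExt.ext
    · simp
    · simp only [TrivSqZeroExt.snd_add, TrivSqZeroExt.snd_inl, TrivSqZeroExt.snd_inr, zero_add, TrivSqZeroExt.snd_mul, TrivSqZeroExt.fst_add, TrivSqZeroExt.fst_inl, TrivSqZeroExt.fst_inr, add_zero, derivative_mul, derivative_add, map_mul, map_add, smul_eq_mul, MulOpposite.smul_eq_mul_unop, MulOpposite.unop_op]

lemma ejLiftBase_fst (r : ℝ[X]) : (ejLiftBase r).fst = algebraMap ℝ[X] EJK r := by simp [ejLiftBase]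
lemma ejLiftBase_snd (r : ℝ[X]) : (ejLiftBase r).snd = algebraMap ℝ[X] EJK (derivative r) := by
  show (TrivSqZeroExt.inl (algebraMap ℝ[X] EJK r) +
    TrivSqZeroExt.inr (algebraMap ℝ[X] EJK (derivative r))).snd = _
  simp only [TrivSqZeroExt.snd_add, TrivSqZeroExt.snd_inl, TrivSqZeroExt.snd_inr, zero_add]

lemma ejLift_unit (y : nonZeroDivisors ℝ[X]) : IsUnit (ejLiftBase y) := by
  rw [TrivSqZeroExt.isUnit_iff_isUnit_fst, ejLiftBase_fst]
  exact IsLocalization.map_units EJK y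

def ejLift : EJK →+* DualNumber EJK := IsLocalization.lift (M := nonZeroDivisors ℝ[X]) ejLift_unit

lemma ejLift_alg (r : ℝ[X]) : ejLift (algebraMap ℝ[X] EJK r) = ejLiftBase r :=
  IsLocalization.lift_eq _ _

lemma ejLift_fst (z : EJK) : (ejLift z).fst = z := by
  have : ((TrivSqZeroExt.fstHom ℝ EJK EJK).toRingHom.comp ejLift) = RingHom.id EJK := by
    apply IsLocalization.ringHom_ext (nonZeroDivisors ℝ[X])
    ext r
    · simp [ejLift_alg, ejLiftBase_fst]
    · simp [ejLift_alg, ejLiftBase_fst]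
  exact congrArg (fun g => g z) this

def ejD : Derivation ℝ EJK EJK where
  toFun z := (ejLift z).snd
  map_add' x y := by simp
  map_smul' c x := by
    have h : (c • x : EJK) = algebraMap ℝ[X] EJK (C c) * x := by
      rw [Algebra.smul_def]; rfl
    rw [h, map_mul, TrivSqZeroExt.snd_mul, ejLift_alg, ejLiftBase_snd, ejLiftBase_fst]
    simp [Algebra.smul_def]
    left; rfl
  map_one_eq_zero' := by simp
  leibniz' x y := by
    simp [TrivSqZeroExt.snd_mul, ejLift_fst, mul_comm]

lemma ejD_alg (r : ℝ[X]) : ejD (algebraMap ℝ[X] EJK r) = algebraMap ℝ[X] EJK (derivative r) := by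
  show (ejLift _).snd = _
  rw [ejLift_alg, ejLiftBase_snd]

lemma ejD_iter (r : ℝ[X]) (j : ℕ) :
    ejD^[j] (algebraMap ℝ[X] EJK r) = algebraMap ℝ[X] EJK (derivative^[j] r) := by
  induction j with
  | zero => rfl
  | succ j ih => rw [Function.iterate_succ_apply', ih, ejD_alg, Function.iterate_succ_apply']
end ejone

section ejtwo
open Polynomial
section ejabs
variable {K : Type} [Field K] [Algebra ℝ K] (D : Derivation ℝ K K)

def ejA (a : ℕ → K) (k : ℕ) (y : K) : K := ∑ j ∈ Finset.range (k+1), a j * D^[j] y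

def ejT (p t r y : K) : K := p * D (D y) + t * D y + r * y

def ejNext (a : ℕ → K) (h : K) : ℕ → K
  | 0 => D (a 0) - h * a 0
  | j+1 => a j + D (a (j+1)) - h * a (j+1)

lemma ejD_mul (x y : K) : D (x * y) = x * D y + y * D x := by
  simp [Derivation.leibniz]

lemma ejD_c (l : ℝ) : D (algebraMap ℝ K l) = 0 := D.map_algebraMap l

lemma ejA_next (a : ℕ → K) (k : ℕ) (h : K) (ha : ∀ j, k < j → a j = 0) (y : K) :
    ejA D (ejNext D a h) (k+1) y = D (ejA D a k y) - h * ejA D a k y := by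
  unfold ejA
  rw [Finset.sum_range_succ', map_sum, Finset.mul_sum]
  simp only [ejNext, ejD_mul]
  have h1 : ∑ j ∈ Finset.range (k+1), (a j + D (a (j+1)) - h * a (j+1)) * D^[j+1] y
      = ∑ j ∈ Finset.range (k+1), a j * D^[j+1] y +
        ∑ j ∈ Finset.range (k+1), (D (a (j+1)) - h * a (j+1)) * D^[j+1] y := by
    rw [← Finset.sum_add_distrib]
    exact Finset.sum_congr rfl fun j _ => by ring
  have h2 : ∑ j ∈ Finset.range (k+1), (D (a (j+1)) - h * a (j+1)) * D^[j+1] y +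
       (D (a 0) - h * a 0) * D^[0] y
      = ∑ j ∈ Finset.range (k+1), (D (a j) - h * a j) * D^[j] y := by
    rw [← Finset.sum_range_succ' (fun j => (D (a j) - h * a j) * D^[j] y), Finset.sum_range_succ,
      ha (k+1) (by omega)]
    simp
  rw [h1, add_assoc, h2, ← Finset.sum_add_distrib, ← Finset.sum_sub_distrib]
  refine Finset.sum_congr rfl fun j _ => ?_
  rw [← Function.iterate_succ_apply' (⇑D)]
  ring

lemma ej_intertwine (p t r h y l : K) (hl : D l = 0)
    (hr : r = -l - p * (D h + h^2) - t * h) :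
    D (ejT D p t r y) - h * ejT D p t r y =
      ejT D p (t + D p) (r + D t + 2 * p * D h + D p * h) (D y - h * y) := by
  have hDr : D r = - D (p * (D h + h^2)) - D (t * h) := by
    rw [hr]; simp [hl]
  simp only [ejT, map_add, map_sub, ejD_mul, pow_two, hDr]
  rw [hr]
  ring

def EJChain (p w s : K) (f : ℕ → K) (lam : ℕ → ℝ) (k : ℕ) : Prop :=
  ∃ (a : ℕ → K) (r : K), a k = 1 ∧ (∀ j, k < j → a j = 0) ∧ (∀ i < k, ejA D a k (f i) = 0) ∧
    (∀ y, ejA D a k (ejT D p (s + D p) 0 y) =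
      ejT D p (s + ((k:K)+1) * D p) r (ejA D a k y)) ∧
    ∀ (u : K) (l : ℝ), ejT D p (s + D p) 0 u = -(algebraMap ℝ K l) * u →
      ∃ b : ℕ → K, (∀ j, k ≤ j → b j = 0) ∧
        (∀ j, b j + D (b (j+1)) = p^k * w * ejA D a k u * a (j+1)) ∧
        (p^k * w * ejA D a k u * a 0 - D (b 0) =
          algebraMap ℝ K (∏ i ∈ Finset.range k, (l - lam i)) * w * u) ∧
        (1 ≤ k → ∑ j ∈ Finset.range k, b j * D^[j] (f 0) =
          algebraMap ℝ K (∏ i ∈ Finset.Ico 1 k, (l - lam i)) * (p * w * (f 0 * D u - D (f 0) * u)))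

lemma ejA_add (a : ℕ → K) (k : ℕ) (x y : K) : ejA D a k (x + y) = ejA D a k x + ejA D a k y := by
  unfold ejA
  rw [← Finset.sum_add_distrib]
  refine Finset.sum_congr rfl fun j _ => ?_
  have : D^[j] (x + y) = D^[j] x + D^[j] y := by
    induction j with
    | zero => rfl
    | succ j ih => simp only [Function.iterate_succ_apply', ih (by simp_all; omega), map_add]
  rw [this]; ring

lemma ejA_const (a : ℕ → K) (k : ℕ) (c : ℝ) (y : K) :
    ejA D a k (algebraMap ℝ K c * y) = algebraMap ℝ K c * ejA D a k y := by
  unfold ejA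
  rw [Finset.mul_sum]
  refine Finset.sum_congr rfl fun j _ => ?_
  have : D^[j] (algebraMap ℝ K c * y) = algebraMap ℝ K c * D^[j] y := by
    induction j with
    | zero => rfl
    | succ j ih => simp only [Function.iterate_succ_apply', ih (by simp_all; omega), ejD_mul, ejD_c]; ring
  rw [this]; ring

/-- vanishing of the Wronskian. -/
lemma ej_wr_zero (N k : ℕ) (hk : k < N) (f : ℕ → K) (a : ℕ → K) (hak : a k = 1)
    (h : ∀ i ≤ k, ejA D a k (f i) = 0) :
    Matrix.det (Matrix.of fun i j : Fin N => D^[(j:ℕ)] (f i)) = 0 := by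
  have hred : ∀ j : ℕ, ∃ e : ℕ → K, ∀ y, ejA D a k y = 0 →
      D^[j] y = ∑ l ∈ Finset.range k, e l * D^[l] y := by
    have key : ∀ y, ejA D a k y = 0 → D^[k] y = ∑ l ∈ Finset.range k, (- a l) * D^[l] y := by
      intro y hy
      unfold ejA at hy
      rw [Finset.sum_range_succ, hak] at hy
      simp only [neg_mul, Finset.sum_neg_distrib]
      linear_combination hy
    intro j
    induction j with
    | zero =>
      rcases Nat.eq_zero_or_pos k with hk0 | hk0
      · subst hk0
        exact ⟨fun _ => 0, fun y hy => by simpa using key y hy⟩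
      · refine ⟨fun l => if l = 0 then 1 else 0, fun y _ => ?_⟩
        simp [Finset.sum_ite_eq', hk0]
    | succ j ih =>
      obtain ⟨e, he⟩ := ih
      rcases Nat.eq_zero_or_pos k with hk0 | hk0
      · subst hk0
        exact ⟨fun _ => 0, fun y hy => by
          have := he y hy
          rw [Function.iterate_succ_apply', this]; simp⟩
      obtain ⟨m, rfl⟩ : ∃ m, k = m + 1 := ⟨k - 1, by omega⟩
      refine ⟨fun l => D (e l) + (if l = 0 then 0 else e (l-1)) - e m * a l, fun y hy => ?_⟩
      have h1 := key y hy
      rw [Function.iterate_succ_apply', he y hy, map_sum]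
      simp only [ejD_mul]
      have h3 : ∀ l, D (D^[l] y) = D^[l+1] y := fun l => (Function.iterate_succ_apply' _ _ _).symm
      simp only [h3, add_mul, sub_mul, Finset.sum_add_distrib, Finset.sum_sub_distrib]
      have h4 : ∑ l ∈ Finset.range (m+1), (if l = 0 then 0 else e (l-1)) * D^[l] y
          = ∑ l ∈ Finset.range m, e l * D^[l+1] y := by
        rw [Finset.sum_range_succ']; simp
      have h5 : ∑ l ∈ Finset.range (m+1), e m * a l * D^[l] y = - (e m * D^[m+1] y) := by
        rw [h1, Finset.mul_sum, ← Finset.sum_neg_distrib]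
        exact Finset.sum_congr rfl fun l _ => by ring
      rw [h4, h5, Finset.sum_range_succ]
      have h6 : ∑ x ∈ Finset.range (m+1), D^[x] y * D (e x) =
        ∑ x ∈ Finset.range (m+1), D (e x) * D^[x] y :=
        Finset.sum_congr rfl fun l _ => by ring
      rw [h6]; ring
  choose e he using hred
  -- linear dependence
  have hdep : ∃ c : Fin (k+1) → K, c ≠ 0 ∧ ∀ j < k, ∑ i, c i * D^[j] (f i) = 0 := by
    let Mx : Matrix (Fin (k+1)) (Fin k) K := Matrix.of fun i j => D^[(j:ℕ)] (f i)
    have : ¬ LinearIndependent K (fun i => Mx i) := by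
      intro hl
      have := hl.fintype_card_le_finrank
      simp at this
    rw [Fintype.not_linearIndependent_iff] at this
    obtain ⟨c, hc, i, hi⟩ := this
    refine ⟨c, fun h => hi (by simp [h]), fun j hj => ?_⟩
    have := congrFun hc ⟨j, hj⟩
    simpa [Mx] using this
  obtain ⟨c, hc0, hc⟩ := hdep
  have hall : ∀ j, ∑ i, c i * D^[j] (f i) = 0 := by
    intro j
    have : ∀ i : Fin (k+1), D^[j] (f i) = ∑ l ∈ Finset.range k, e j l * D^[l] (f i) :=
      fun i => he j _ (h i (by omega))
    simp only [this, Finset.mul_sum]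
    rw [Finset.sum_comm]
    refine Finset.sum_eq_zero fun l hl => ?_
    have := hc l (Finset.mem_range.1 hl)
    have h2 : ∑ i, c i * (e j l * D^[l] (f i)) = e j l * ∑ i, c i * D^[l] (f i) := by
      rw [Finset.mul_sum]; exact Finset.sum_congr rfl fun i _ => by ring
    rw [h2, this, mul_zero]
  rw [← Matrix.exists_vecMul_eq_zero_iff]
  refine ⟨fun i => if hi : (i:ℕ) < k+1 then c ⟨i, hi⟩ else 0, ?_, ?_⟩
  · intro h0
    apply hc0
    funext i
    have := congrFun h0 ⟨i, by omega⟩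
    have hi : (i:ℕ) < k + 1 := i.2
    simpa [hi, Nat.lt_succ_iff.1 hi] using this
  · funext j
    have := hall j
    simp only [Matrix.vecMul, dotProduct, Matrix.of_apply, Pi.zero_apply]
    refine Eq.trans ?_ this
    have hle : k + 1 ≤ N := hk
    rw [Fin.sum_univ_eq_sum_range (fun i => (if hi : i < k+1 then c ⟨i, hi⟩ else 0) * D^[(j:ℕ)] (f i)) N]
    rw [← Finset.sum_subset (Finset.range_mono hle)]
    · rw [← Fin.sum_univ_eq_sum_range (fun i => (if hi : i < k+1 then c ⟨i, hi⟩ else 0) * D^[(j:ℕ)] (f i)) (k+1)]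
      refine Finset.sum_congr rfl fun i _ => ?_
      rw [dif_pos i.2]
    · intro x _ hx
      simp at hx
      rw [dif_neg (by omega)]; simp

theorem ej_chain (p w s : K) (hw : p * D w = s * w) (f : ℕ → K) (lam : ℕ → ℝ) (N : ℕ)
    (hW : Matrix.det (Matrix.of fun i j : Fin N => D^[(j:ℕ)] (f i)) ≠ 0)
    (hf : ∀ i < N, ejT D p (s + D p) 0 (f i) = -(algebraMap ℝ K (lam i)) * f i ∨
      ∃ j < i, ∃ c : ℝ, ejT D p (s + D p) 0 (f i) =
        -(algebraMap ℝ K (lam i)) * f i + algebraMap ℝ K c * f j) :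
    ∀ k ≤ N, EJChain D p w s f lam k := by
  intro k
  induction k with
  | zero =>
    intro _
    refine ⟨fun j => if j = 0 then 1 else 0, 0, by simp, fun j hj => by simp; omega, by simp, ?_, ?_⟩
    · intro y; simp [ejA]
    · intro u l _
      refine ⟨fun _ => 0, by simp, by simp, ?_, by simp⟩
      simp [ejA]
  | succ k ih =>
    intro hk
    obtain ⟨a, r, hak, haj, hker, hint, hconc⟩ := ih (by omega)
    set φ := ejA D a k (f k) with hφ
    have hφ0 : φ ≠ 0 := by
      intro h0
      apply hW
      apply ej_wr_zero D N k (by omega) f a hak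
      intro i hi
      rcases Nat.lt_or_ge i k with h | h
      · exact hker i h
      · obtain rfl : i = k := by omega
        exact h0
    set L := algebraMap ℝ K (lam k) with hL
    set t := s + ((k:K)+1) * D p with ht
    have hTφ : ejT D p t r φ = -L * φ := by
      rw [hφ, ← hint]
      rcases hf k (by omega) with h | ⟨j, hj, c, h⟩
      · rw [h, ← map_neg, ejA_const, map_neg]
      · rw [h, ejA_add, ejA_const, hker j hj, ← map_neg, ejA_const, map_neg]
        ring
    set h := D φ / φ with hh
    have hDφ : D φ = h * φ := by rw [hh]; field_simp
    have hr : r = -L - p * (D h + h^2) - t * h := by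
      have h2 : D (D φ) = (D h + h^2) * φ := by
        rw [hDφ, ejD_mul, hDφ]; ring
      unfold ejT at hTφ
      rw [h2, hDφ] at hTφ
      apply mul_right_cancel₀ hφ0
      linear_combination hTφ
    have hA : ∀ y, ejA D (ejNext D a h) (k+1) y = D (ejA D a k y) - h * ejA D a k y :=
      ejA_next D a k h haj
    refine ⟨ejNext D a h, r + D t + 2 * p * D h + D p * h, ?_, ?_, ?_, ?_, ?_⟩
    · simp [ejNext, hak, haj]
    · intro j hj
      obtain ⟨m, rfl⟩ : ∃ m, j = m + 1 := ⟨j - 1, by omega⟩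
      simp [ejNext, haj m (by omega), haj (m+1) (by omega)]
    · intro i hi
      rw [hA]
      rcases Nat.lt_or_ge i k with h' | h'
      · rw [hker i h']; simp
      · obtain rfl : i = k := by omega
        rw [← hφ, hDφ]; ring
    · intro y
      rw [hA, hA, hint, ej_intertwine D p t r h _ L (ejD_c D _) hr]
      congr 1
      rw [ht]; push_cast; ring
    · intro u l hu
      obtain ⟨b, hb1, hb2, hb3, hb4⟩ := hconc u l hu
      set y := ejA D a k u with hy
      have hTy : ejT D p t r y = -(algebraMap ℝ K l) * y := by
        rw [hy, ← hint, hu, ← map_neg, ejA_const]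
      set γ := p^(k+1) * w * (D y - h * y) with hγ
      have hpw : p * D (p^k * w) = (s + (k:K) * D p) * (p^k * w) := by
        rw [ejD_mul, Derivation.leibniz_pow]
        rcases Nat.eq_zero_or_pos k with h0 | h0
        · rw [h0]; simp; linear_combination hw
        · obtain ⟨m, rfl⟩ : ∃ m, k = m + 1 := ⟨k - 1, by omega⟩
          simp only [smul_eq_mul, nsmul_eq_mul, Nat.add_sub_cancel]
          push_cast
          linear_combination p^(m+1) * hw
      set ω := p^k * w with hω
      have hγ1 : γ = p * ω * (D y - h * y) := by rw [hγ, hω]; ring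
      have hDγ : D γ + h * γ = - ((algebraMap ℝ K l - L) * (ω * y)) := by
        have e1 : D γ = D p * ω * (D y - h * y) + (p * D ω) * (D y - h * y) +
            p * ω * (D (D y) - D h * y - h * D y) := by
          rw [hγ1]; simp only [ejD_mul, map_sub]; ring
        rw [e1, hpw, hγ1]
        unfold ejT at hTy
        rw [hr, ht] at hTy
        linear_combination ω * hTy
      refine ⟨fun j => γ * a j * (if j ≤ k then 1 else 0) + (algebraMap ℝ K l - L) * b j, ?_, ?_, ?_, ?_⟩
      · intro j hj
        simp [haj j (by omega), hb1 j (by omega)]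
      · intro j
        have hif : ∀ j, γ * a j * (if j ≤ k then 1 else 0) = γ * a j := by
          intro j; split_ifs with h'
          · ring
          · rw [haj j (by omega)]; ring
        simp only [hif]
        rw [hA, ← hy, ← hγ]
        simp only [ejNext, map_add, ejD_mul, map_sub, ejD_c, hL]
        have := hb2 j
        linear_combination a (j+1) * hDγ + (algebraMap ℝ K l - L) * this
      · rw [hA, ← hy, ← hγ]
        simp only [ejNext, map_add, ejD_mul, map_sub, ejD_c, hL, Finset.prod_range_succ, map_mul]
        simp only [zero_le, if_true, mul_one, zero_add, zero_mul, mul_zero, add_zero, sub_zero, sub_self, Derivation.map_one_eq_zero]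
        rw [← hL]
        linear_combination -a 0 * hDγ + (algebraMap ℝ K l - L) * hb3
      · intro _
        have e1 : ∑ j ∈ Finset.range (k+1), (γ * a j * (if j ≤ k then 1 else 0) + (algebraMap ℝ K l - L) * b j) * D^[j] (f 0)
           = γ * ejA D a k (f 0) + (algebraMap ℝ K l - L) * ∑ j ∈ Finset.range k, b j * D^[j] (f 0) := by
          have : ∑ j ∈ Finset.range k, b j * D^[j] (f 0) = ∑ j ∈ Finset.range (k+1), b j * D^[j] (f 0) := by
            rw [Finset.sum_range_succ, hb1 k le_rfl]; simp
          rw [this]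
          unfold ejA
          rw [Finset.mul_sum, Finset.mul_sum, ← Finset.sum_add_distrib]
          refine Finset.sum_congr rfl fun j hj => ?_
          rw [if_pos (by simp at hj; omega)]; ring
        rw [e1]
        rcases Nat.eq_zero_or_pos k with h0 | h0
        · subst h0
          have ey : y = u := by rw [hy]; simp [ejA, hak]
          have e2 : φ = f 0 := by rw [hφ]; simp [ejA, hak]
          rw [e2] at hDφ
          rw [← hφ, hγ, e2, ey]
          simp
          rw [hDφ]; ring
        · rw [hker 0 h0, hb4 h0, Finset.prod_Ico_succ_top h0]
          simp only [map_mul, map_sub]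
          ring

end ejabs
end ejtwo

noncomputable section ejtrans
open Polynomial

def jT (a b : ℕ) (y : ℝ[X]) : ℝ[X] :=
  (1 - X^2) * derivative (derivative y) +
    (C ((a:ℝ) - b) + C ((a:ℝ) + b - 2) * X) * derivative y

def wrM (N : ℕ) (f : ℕ → ℝ[X]) : Matrix (Fin N) (Fin N) ℝ[X] :=
  Matrix.of fun i j => derivative^[(j:ℕ)] (f i)

def wrE (N : ℕ) (f : ℕ → ℝ[X]) (u : ℝ[X]) : Matrix (Fin (N+1)) (Fin (N+1)) ℝ[X] :=
  Matrix.of fun i j => Fin.cases (derivative^[(j:ℕ)] u) (fun k => derivative^[(j:ℕ)] (f k)) i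

variable {K : Type} [Field K] [Algebra ℝ K] (D : Derivation ℝ K K) (ι : ℝ[X] →+* K)

lemma ejDi (hD : ∀ r, D (ι r) = ι (derivative r)) (r : ℝ[X]) (j : ℕ) : D^[j] (ι r) = ι (derivative^[j] r) := by
  induction j with
  | zero => rfl
  | succ j ih => rw [Function.iterate_succ_apply', Function.iterate_succ_apply', ih, hD]

lemma ej_cramer1 (hD : ∀ r, D (ι r) = ι (derivative r)) (N : ℕ) (f : ℕ → ℝ[X]) (u : ℝ[X]) (a : ℕ → K) (haN : a N = 1)
    (hker : ∀ i < N, ejA D a N (ι (f i)) = 0) :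
    ι (wrE N f u).det =
      (-1)^N * ι (wrM N f).det * ejA D a N (ι u) := by
  set Mx := ι.mapMatrix (wrE N f u) with hMx
  have h1 : Mx.mulVec (fun j => a j) = Pi.single 0 (ejA D a N (ι u)) := by
    funext i
    refine Fin.cases ?_ (fun k => ?_) i
    · simp only [Matrix.mulVec, dotProduct, Pi.single_eq_same, ejA]
      rw [← Fin.sum_univ_eq_sum_range (fun j => a j * D^[j] (ι u))]
      refine Finset.sum_congr rfl fun j _ => ?_
      simp [hMx, wrE, ejDi D ι hD, mul_comm]
    · rw [Pi.single_eq_of_ne (Fin.succ_ne_zero k), ← hker k k.2]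
      simp only [Matrix.mulVec, dotProduct, ejA]
      rw [← Fin.sum_univ_eq_sum_range (fun j => a j * D^[j] (ι (f k)))]
      refine Finset.sum_congr rfl fun j _ => ?_
      simp [hMx, wrE, ejDi D ι hD, mul_comm]
  have h2 := congrArg (fun v => (Mx.adjugate.mulVec v) (Fin.last N)) h1
  simp only [Matrix.mulVec_mulVec, Matrix.adjugate_mul, Matrix.smul_mulVec, Matrix.one_mulVec,
    Matrix.mulVec_single, Pi.smul_apply, Fin.val_last, haN, smul_eq_mul, mul_one] at h2
  rw [RingHom.map_det, ← hMx, h2]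
  simp only [Matrix.col_apply, MulOpposite.smul_eq_mul_unop, MulOpposite.unop_op,
    Matrix.adjugate_fin_succ_eq_det_submatrix]
  rw [RingHom.map_det]
  congr 1
  have h3 : (Mx.submatrix (Fin.succAbove 0) (Fin.last N).succAbove) =
     ι.mapMatrix (wrM N f) := by
    ext i j
    simp [hMx, wrE, wrM]
  rw [h3]
  simp

lemma ej_cramer2 (hD : ∀ r, D (ι r) = ι (derivative r)) (N : ℕ) (f : ℕ → ℝ[X]) (a : ℕ → K) (haN : a N = 1)
    (hker : ∀ i < N, ejA D a N (ι (f i)) = 0) (j : ℕ) (hj : j < N) :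
    ∃ P : ℝ[X], a j * ι (wrM N f).det = ι P := by
  set Mx := ι.mapMatrix (wrM N f) with hMx
  have h1 : Mx.mulVec (fun j => a j) = fun i : Fin N => ι (- derivative^[N] (f i)) := by
    funext i
    have h := hker i i.2
    simp only [ejA] at h
    rw [Finset.sum_range_succ, haN, ← Fin.sum_univ_eq_sum_range (fun j => a j * D^[j] (ι (f i)))] at h
    simp only [Matrix.mulVec, dotProduct]
    rw [map_neg, ← ejDi D ι hD]
    rw [one_mul] at h
    rw [← add_eq_zero_iff_eq_neg, ← h]
    congr 1
    refine Finset.sum_congr rfl fun j _ => ?_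
    simp [hMx, wrM, ejDi D ι hD, mul_comm]
  have h2 := congrArg (fun v => (Mx.adjugate.mulVec v) ⟨j, hj⟩) h1
  simp only [Matrix.mulVec_mulVec, Matrix.adjugate_mul, Matrix.smul_mulVec, Matrix.one_mulVec,
    Pi.smul_apply, smul_eq_mul] at h2
  rw [RingHom.map_det, ← hMx, mul_comm, h2]
  refine ⟨((wrM N f).adjugate.mulVec (fun i : Fin N => - derivative^[N] (f i))) ⟨j, hj⟩, ?_⟩
  rw [hMx, ← RingHom.map_adjugate]
  simp [Matrix.mulVec, dotProduct]

def ejGood (Ω : ℝ[X]) (e e' m : ℕ) (z : K) : Prop :=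
  ∃ P : ℝ[X], z * ι Ω ^ m = ι ((1-X)^e * (1+X)^e' * P)

lemma ejGood_zero (Ω : ℝ[X]) (e e' m : ℕ) : ejGood ι Ω e e' m 0 := ⟨0, by simp⟩

lemma ejGood_sub {Ω : ℝ[X]} {e e' m : ℕ} {z z' : K} (h : ejGood ι Ω e e' m z)
    (h' : ejGood ι Ω e e' m z') : ejGood ι Ω e e' m (z - z') := by
  obtain ⟨P, hP⟩ := h
  obtain ⟨Q, hQ⟩ := h'
  refine ⟨P - Q, ?_⟩
  rw [sub_mul, hP, hQ, mul_sub, map_sub]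

lemma ejGood_mono {Ω : ℝ[X]} {e e' m m' : ℕ} {z : K} (h : ejGood ι Ω e e' m z) (hm : m ≤ m') :
    ejGood ι Ω e e' m' z := by
  obtain ⟨P, hP⟩ := h
  obtain ⟨k, rfl⟩ := Nat.exists_eq_add_of_le hm
  refine ⟨P * Ω^k, ?_⟩
  rw [pow_add, ← mul_assoc, hP, ← map_pow, ← map_mul]
  congr 1; ring

lemma ejGood_D (hD : ∀ r, D (ι r) = ι (derivative r)) {Ω : ℝ[X]} (hΩ : Ω ≠ 0) {e e' m : ℕ} {z : K} (h : ejGood ι Ω e e' m z) :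
    ejGood ι Ω (e-1) (e'-1) (m+1) (D z) := by
  obtain ⟨P, hP⟩ := h
  have hd : ∀ (e e' : ℕ) (P : ℝ[X]), ∃ Q, derivative ((1-X)^e * (1+X)^e' * P) = (1-X)^(e-1) * (1+X)^(e'-1) * Q ∧
      True := by
    intro e e' P
    have h1 : (1-X : ℝ[X])^(e-1) ∣ (1-X)^e := pow_dvd_pow _ (by omega)
    have h2 : (1+X : ℝ[X])^(e'-1) ∣ (1+X)^e' := pow_dvd_pow _ (by omega)
    have h : (1-X)^(e-1) * (1+X)^(e'-1) ∣ derivative ((1-X)^e * (1+X)^e' * P) := by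
      rw [derivative_mul, derivative_mul, derivative_pow, derivative_pow]
      refine dvd_add (Dvd.dvd.mul_right (dvd_add ?_ ?_) _) (Dvd.dvd.mul_right (mul_dvd_mul h1 h2) _)
      · rw [mul_assoc, mul_assoc]
        refine Dvd.dvd.mul_left ?_ _
        refine mul_dvd_mul dvd_rfl (Dvd.dvd.mul_left h2 _)
      · refine mul_dvd_mul h1 ?_
        rw [mul_assoc]
        refine Dvd.dvd.mul_left (dvd_mul_right _ _) _
    obtain ⟨Q, hQ⟩ := h
    exact ⟨Q, hQ, trivial⟩
  obtain ⟨Q, hQ, -⟩ := hd e e' P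
  have h1 : (1-X : ℝ[X])^e = (1-X)^(e-1) * (1-X)^(e - (e-1)) := by
    rw [← pow_add]; congr 1; omega
  have h2 : (1+X : ℝ[X])^e' = (1+X)^(e'-1) * (1+X)^(e' - (e'-1)) := by
    rw [← pow_add]; congr 1; omega
  have hDP := congrArg D hP
  rw [ejD_mul, hD, hQ, ← map_pow, hD] at hDP
  refine ⟨Q * Ω - C (m:ℝ) * ((1-X)^(e - (e-1)) * (1+X)^(e' - (e'-1)) * P) * derivative Ω, ?_⟩
  have hmm : Ω * derivative (Ω^m) = C (m:ℝ) * Ω^m * derivative Ω := by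
    rw [derivative_pow]
    rcases Nat.eq_zero_or_pos m with h0 | h0
    · subst h0; simp
    · obtain ⟨k, rfl⟩ : ∃ k, m = k+1 := ⟨m-1, by omega⟩
      simp only [Nat.add_sub_cancel]
      ring
  have hmm' := congrArg (ι) hmm
  simp only [map_mul, map_pow] at hmm' hDP hP
  rw [mul_sub, map_sub]
  have e3 : (1-X)^(e-1) * (1+X)^(e'-1) * (C (m:ℝ) * ((1-X)^(e - (e-1)) * (1+X)^(e' - (e'-1)) * P) * derivative Ω)
     = C (m:ℝ) * ((1-X)^e * (1+X)^e' * P) * derivative Ω := by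
    rw [h1, h2]
    generalize (1-X : ℝ[X])^(e-(e-1)) = A
    generalize (1+X : ℝ[X])^(e'-(e'-1)) = B
    ring
  rw [e3]
  simp only [map_mul, map_pow]
  rw [pow_succ]
  linear_combination ι Ω * hDP - z * hmm' - ι (C (m:ℝ)) * ι (derivative Ω) * hP
end ejtrans

noncomputable section ejtrans2
open Polynomial

lemma ej_conc_deriv {K : Type} [Field K] [Algebra ℝ K] (D : Derivation ℝ K K) (N : ℕ) (a b : ℕ → K) (γ v : K)
    (hbN : b N = 0) (hb : ∀ j, b j + D (b (j+1)) = γ * a (j+1)) :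
    D (∑ j ∈ Finset.range N, b j * D^[j] v) = γ * ejA D a N v - (γ * a 0 - D (b 0)) * v := by
  have h1 : D (∑ j ∈ Finset.range N, b j * D^[j] v) =
      ∑ j ∈ Finset.range N, (γ * (a (j+1) * D^[j+1] v) + (D (b j) * D^[j] v - D (b (j+1)) * D^[j+1] v)) := by
    rw [map_sum]
    refine Finset.sum_congr rfl fun j _ => ?_
    rw [ejD_mul, ← Function.iterate_succ_apply' (⇑D)]
    have := hb j
    linear_combination D^[j+1] v * this
  rw [h1, Finset.sum_add_distrib, Finset.sum_range_sub', ← Finset.mul_sum]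
  unfold ejA
  rw [Finset.sum_range_succ' _ N, hbN]
  simp
  ring

variable {K : Type} [Field K] [Algebra ℝ K] (D : Derivation ℝ K K) (ι : ℝ[X] →+* K)

lemma jT_map (hD : ∀ r, D (ι r) = ι (derivative r)) (a b : ℕ) (y : ℝ[X]) :
    ι (jT a b y) = ejT D (ι (1 - X^2))
      (ι (C ((a:ℝ) - b) + C ((a:ℝ)+b) * X) + D (ι (1 - X^2))) 0
      (ι y) := by
  unfold jT ejT
  simp only [hD]
  rw [← map_add, ← map_mul, ← map_mul, ← map_add, zero_mul, add_zero]
  congr 1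
  simp
  left
  have : (C (2:ℝ)) = (2 : ℝ[X]) := rfl
  rw [this]
  ring

set_option maxHeartbeats 2000000 in
theorem ej_transfer_K (hD : ∀ r, D (ι r) = ι (derivative r)) (hinj : Function.Injective ι) (hC : ∀ c : ℝ, algebraMap ℝ K c = ι (C c))
    (a b N : ℕ) (ha : 1 ≤ a) (hb : 1 ≤ b) (haN : a ≤ N) (hbN : b ≤ N)
    (f : ℕ → ℝ[X]) (lam : ℕ → ℝ) (hΩ0 : (wrM N f).det ≠ 0)
    (hf : ∀ i < N, jT a b (f i) = -C (lam i) * f i ∨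
      ∃ j < i, ∃ c, jT a b (f i) = -C (lam i) * f i + C c * f j)
    (u : ℝ[X]) (l : ℝ) (hu : jT a b u = -C l * u) :
    ∃ Bn : ℝ[X] →ₗ[ℝ] ℝ[X],
      (∀ v, (1-X)^a * (1+X)^b * (derivative (Bn v) * (wrM N f).det -
          C ((N+1 : ℕ):ℝ) * Bn v * derivative (wrM N f).det) * (wrM N f).det =
        (wrM N f).det ^ (N+1) * ((1-X)^N * (1+X)^N * (wrE N f u).det * (wrE N f v).det) -
        C (∏ i ∈ Finset.range N, (l - lam i)) * (wrM N f).det ^ (N+3) * u * v) ∧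
      (∀ v, (1-X)^a ∣ v → (Bn v).eval 1 = 0) ∧
      (∀ v, (1+X)^b ∣ v → (Bn v).eval (-1) = 0) ∧
      ((1-X)^(a-1) * (1+X)^(b-1) * Bn (f 0) = C (∏ i ∈ Finset.Ico 1 N, (l - lam i)) *
        (wrM N f).det ^ (N+1) * (f 0 * derivative u - derivative (f 0) * u)) := by
  set Ω := (wrM N f).det with hΩ
  have hn1 : ι (1-X) ≠ 0 := by
    rw [Ne, map_eq_zero_iff ι hinj]
    intro h
    have := congrArg (eval 0) h
    simp at this
  have hn2 : ι (1+X) ≠ 0 := by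
    rw [Ne, map_eq_zero_iff ι hinj]
    intro h
    have := congrArg (eval 0) h
    simp at this
  have hΩι : ι Ω ≠ 0 := by rwa [Ne, map_eq_zero_iff ι hinj]
  set Q : ℝ[X] := (1-X)^a * (1+X)^b with hQ
  have hQ0 : ι Q ≠ 0 := by
    rw [hQ, map_mul, map_pow, map_pow]; exact mul_ne_zero (pow_ne_zero _ hn1) (pow_ne_zero _ hn2)
  set p := ι (1 - X^2) with hp
  have hp12 : p = ι (1-X) * ι (1+X) := by rw [hp, ← map_mul]; congr 1; ring
  set w := (ι Q)⁻¹ with hw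
  have hwQ : w * ι Q = 1 := inv_mul_cancel₀ hQ0
  set s := ι (C ((a:ℝ) - b) + C ((a:ℝ)+b) * X) with hs
  have hpw : p * D w = s * w := by
    have h1 := congrArg D hwQ
    rw [ejD_mul, hD, Derivation.map_one_eq_zero] at h1
    have h2 : (1 - X^2) * derivative Q = - ((C ((a:ℝ) - b) + C ((a:ℝ)+b) * X)) * Q := by
      obtain ⟨a', rfl⟩ : ∃ k, a = k+1 := ⟨a-1, by omega⟩
      obtain ⟨b', rfl⟩ : ∃ k, b = k+1 := ⟨b-1, by omega⟩
      rw [hQ]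
      simp [derivative_pow]
      ring
    have h3 := congrArg ι h2
    rw [map_mul ι, map_mul ι, map_neg ι, ← hs, ← hp] at h3
    apply mul_right_cancel₀ hQ0
    linear_combination p * h1 - w * h3
  have hchain := ej_chain D p w s hpw (fun i => ι (f i)) lam N (by
      have : (Matrix.of fun i j : Fin N => D^[(j:ℕ)] (ι (f i))) = ι.mapMatrix (wrM N f) := by
        ext i j; simp [wrM, ejDi D ι hD]
      rw [this, ← RingHom.map_det]; exact hΩι) (by
      intro i hi
      rcases hf i hi with h | ⟨j, hj, c, h⟩
      · left
        rw [← jT_map D ι hD, h, map_mul, map_neg, hC]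
      · right
        refine ⟨j, hj, c, ?_⟩
        rw [← jT_map D ι hD, h, map_add, map_mul, map_mul, map_neg, hC, hC]) N le_rfl
  obtain ⟨A, r, hAN, -, hker, -, hconc⟩ := hchain
  obtain ⟨B, hB1, hB2, hB3, hB4⟩ := hconc (ι u) l (by
    rw [← jT_map D ι hD, hu, map_mul, map_neg, hC])
  have hcr := fun v => ej_cramer1 D ι hD N f v A hAN hker
  have hcr2 := ej_cramer2 D ι hD N f A hAN hker
  set γ := p^N * w * ejA D A N (ι u) with hγ
  have hpN : p^N * w = ι ((1-X)^(N-a) * (1+X)^(N-b)) := by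
    have : p^N = ι ((1-X)^(N-a) * (1+X)^(N-b)) * ι Q := by
      rw [hp12, hQ, ← map_mul, ← map_mul, ← map_pow]
      congr 1
      rw [mul_pow]
      nth_rewrite 1 [show N = (N-a) + a by omega]
      nth_rewrite 2 [show N = (N-b) + b by omega]
      rw [pow_add, pow_add]; ring
    rw [this, hw]; field_simp
  have hsq : ((-1:K)^N) * (-1)^N = 1 := by
    rw [← mul_pow]; simp
  have hAu : ∀ v, ejA D A N (ι v) * ι Ω = ι ((-1)^N * (wrE N f v).det) := by
    intro v
    rw [map_mul, hcr v]
    simp only [map_pow, map_neg, map_one]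
    linear_combination (- ejA D A N (ι v) * ι Ω) * hsq
  have hgood : ∀ i j, j + i = N → ejGood ι Ω (j+1-a) (j+1-b) (i+1) (B j) := by
    intro i
    induction i with
    | zero => intro j hj; rw [hB1 j (by omega)]; exact ejGood_zero _ _ _ _ _
    | succ i ih =>
      intro j hj
      have e1 : B j = γ * A (j+1) - D (B (j+1)) := by rw [← hB2 j]; ring
      rw [e1]
      have hgd := ejGood_D D ι hD hΩ0 (ih (j+1) (by omega))
      rw [show j+1+1-a-1 = j+1-a by omega, show j+1+1-b-1 = j+1-b by omega] at hgd
      refine ejGood_sub ι ?_ hgd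
      have hAj : ∃ P, A (j+1) * ι Ω = ι P := by
        rcases Nat.lt_or_ge (j+1) N with h | h
        · exact hcr2 (j+1) h
        · obtain rfl : j + 1 = N := by omega
          exact ⟨Ω, by rw [hAN, one_mul]⟩
      obtain ⟨P, hP⟩ := hAj
      refine ejGood_mono ι (m := 2) ?_ (by omega)
      refine ⟨(1-X)^(N-a-(j+1-a)) * (1+X)^(N-b-(j+1-b)) * ((-1)^N * (wrE N f u).det) * P, ?_⟩
      have e2 : (1-X)^(j+1-a) * (1+X)^(j+1-b) * ((1-X)^(N-a-(j+1-a)) * (1+X)^(N-b-(j+1-b)) * ((-1)^N * (wrE N f u).det) * P)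
        = ((1-X)^(N-a) * (1+X)^(N-b)) * ((-1)^N * (wrE N f u).det) * P := by
        have q1 : (1-X:ℝ[X])^(N-a) = (1-X)^(j+1-a) * (1-X)^(N-a-(j+1-a)) := by
          rw [← pow_add]; congr 1; omega
        have q2 : (1+X:ℝ[X])^(N-b) = (1+X)^(j+1-b) * (1+X)^(N-b-(j+1-b)) := by
          rw [← pow_add]; congr 1; omega
        rw [q1, q2]
        generalize (1-X:ℝ[X])^(N-a-(j+1-a)) = Y1
        generalize (1+X:ℝ[X])^(N-b-(j+1-b)) = Y2
        ring
      rw [e2, map_mul ι, map_mul ι, ← hpN, ← hAu, ← hP, hγ]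
      ring
  have hgood2 : ∀ j, ∃ P, j ≤ N → B j * ι Ω ^ (N+1) = ι ((1-X)^(j+1-a) * (1+X)^(j+1-b) * P) := by
    intro j
    by_cases hj : j ≤ N
    · obtain ⟨P, hP⟩ := ejGood_mono ι (hgood (N-j) j (by omega)) (show N - j + 1 ≤ N + 1 by omega)
      exact ⟨P, fun _ => hP⟩
    · exact ⟨0, fun h => absurd h hj⟩
  choose P hP using hgood2
  let Bn : ℝ[X] →ₗ[ℝ] ℝ[X] := 
    { toFun := fun v => ∑ j ∈ Finset.range N, (1-X)^(j+1-a) * (1+X)^(j+1-b) * P j * derivative^[j] v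
      map_add' := by
        intro x y
        rw [← Finset.sum_add_distrib]
        refine Finset.sum_congr rfl fun j _ => ?_
        rw [iterate_map_add]; ring
      map_smul' := by
        intro c x
        rw [RingHom.id_apply, Finset.smul_sum]
        refine Finset.sum_congr rfl fun j _ => ?_
        rw [iterate_derivative_smul, mul_smul_comm] }
  have hBn : ∀ v, ι (Bn v) = (∑ j ∈ Finset.range N, B j * D^[j] (ι v)) * ι Ω ^ (N+1) := by
    intro v
    show ι (∑ j ∈ Finset.range N, (1-X)^(j+1-a) * (1+X)^(j+1-b) * P j * derivative^[j] v) = _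
    rw [map_sum, Finset.sum_mul]
    refine Finset.sum_congr rfl fun j hj => ?_
    rw [map_mul, ← hP j (Finset.mem_range.1 hj).le, ejDi D ι hD]
    ring
  refine ⟨Bn, ?_, ?_, ?_, ?_⟩
  · intro v
    apply hinj
    have h1 := ej_conc_deriv D N A B γ (ι v) (hB1 N le_rfl) hB2
    set S := ∑ j ∈ Finset.range N, B j * D^[j] (ι v) with hS
    rw [hB3] at h1
    have h2 : ι (derivative (Bn v)) = D S * ι Ω ^ (N+1) + S * (((N+1 : ℕ) : K) * ι Ω ^ N * ι (derivative Ω)) := by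
      rw [← hD, hBn v, ejD_mul, Derivation.leibniz_pow]
      simp only [Nat.add_sub_cancel, smul_eq_mul, nsmul_eq_mul, hD]
      ring
    simp only [map_mul, map_sub, map_pow]
    have h3 := hAu u
    have h4 := hAu v
    have h5 : γ * ejA D A N (ι v) * ι Ω ^2 * ι Q = p^N * ι (wrE N f u).det * ι (wrE N f v).det := by
      rw [hγ]
      simp only [map_mul, map_pow, map_neg, map_one] at h3 h4
      have : ι (wrE N f u).det * ι (wrE N f v).det = (ejA D A N (ι u) * ι Ω) * (ejA D A N (ι v) * ι Ω) := by
        rw [h3, h4]; linear_combination (-ι (wrE N f u).det * ι (wrE N f v).det) * hsq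
      rw [mul_assoc (p^N) (ι (wrE N f u).det), this]
      linear_combination (p^N * ejA D A N (ι u) * ejA D A N (ι v) * ι Ω ^2) * hwQ
    rw [h2, hBn v, h1]
    have h6 : (ι 1 - ι X)^N * ι (1+X)^N = p^N := by rw [hp12, mul_pow, map_sub]
    rw [h6]
    have h7 : ι (C ((N+1 : ℕ):ℝ)) = ((N+1:ℕ):K) := by simp
    rw [h7, ← hC]
    rw [mul_assoc _ (ι (wrE N f u).det)] at *
    linear_combination (ι Ω ^ (N+1)) * h5 - (algebraMap ℝ K (∏ i ∈ Finset.range N, (l - lam i)) * ι u * ι v * ι Ω ^ (N+3)) * hwQ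
  · intro v hv
    show eval 1 (∑ j ∈ Finset.range N, (1-X)^(j+1-a) * (1+X)^(j+1-b) * P j * derivative^[j] v) = 0
    rw [eval_finset_sum]
    refine Finset.sum_eq_zero fun j hj => ?_
    rcases Nat.lt_or_ge j a with h | h
    · have := pow_sub_dvd_iterate_derivative_of_pow_dvd j hv
      have h2 : (1 - X : ℝ[X]) ∣ derivative^[j] v :=
        (dvd_pow_self _ (by omega)).trans this
      obtain ⟨q, hq⟩ := h2
      rw [hq]; simp
    · have : j + 1 - a ≠ 0 := by omega
      simp [this]
  · intro v hv
    show eval (-1) (∑ j ∈ Finset.range N, (1-X)^(j+1-a) * (1+X)^(j+1-b) * P j * derivative^[j] v) = 0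
    rw [eval_finset_sum]
    refine Finset.sum_eq_zero fun j hj => ?_
    rcases Nat.lt_or_ge j b with h | h
    · have := pow_sub_dvd_iterate_derivative_of_pow_dvd j hv
      have h2 : (1 + X : ℝ[X]) ∣ derivative^[j] v :=
        (dvd_pow_self _ (by omega)).trans this
      obtain ⟨q, hq⟩ := h2
      rw [hq]; simp
    · have : j + 1 - b ≠ 0 := by omega
      simp [this]
  · apply hinj
    have h1 := hB4 (by omega)
    rw [map_mul, hBn (f 0), h1]
    have e1 : ι ((1-X)^(a-1) * (1+X)^(b-1)) * (p * w) = 1 := by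
      have : ι ((1-X)^(a-1) * (1+X)^(b-1)) * p = ι Q := by
        rw [hp, ← map_mul, hQ]
        congr 1
        obtain ⟨a', rfl⟩ : ∃ k, a = k+1 := ⟨a-1, by omega⟩
        obtain ⟨b', rfl⟩ : ∃ k, b = k+1 := ⟨b-1, by omega⟩
        simp only [Nat.add_sub_cancel]; ring
      rw [← mul_assoc, this, mul_comm, hwQ]
    simp only [hD]
    simp only [map_mul, map_sub, map_pow, ← hC] at e1 ⊢
    linear_combination (algebraMap ℝ K (∏ i ∈ Finset.Ico 1 N, (l - lam i)) * (ι (f 0) * ι (derivative u) - ι (derivative (f 0)) * ι u) * ι Ω ^ (N+1)) * e1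

end ejtrans2

noncomputable section ejint
open Polynomial

theorem ej_integral (a b N : ℕ) (ha : 1 ≤ a) (hb : 1 ≤ b) (haN : a ≤ N) (hbN : b ≤ N)
    (f : ℕ → ℝ[X]) (lam : ℕ → ℝ)
    (hΩ : ∀ x ∈ Set.Icc (-1:ℝ) 1, ((wrM N f).det).eval x ≠ 0)
    (hf : ∀ i < N, jT a b (f i) = -C (lam i) * f i ∨
      ∃ j < i, ∃ c, jT a b (f i) = -C (lam i) * f i + C c * f j)
    (u : ℝ[X]) (l : ℝ) (hu : jT a b u = -C l * u) :
    ∃ B₁ B₂ : ℝ[X] →ₗ[ℝ] ℝ,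
      (∀ v h, C (∏ i ∈ Finset.range N, (l - lam i)) * u * v = (1-X)^a * (1+X)^b * h →
        ∫ x in (-1:ℝ)..1, (1-x)^(N-a) * (1+x)^(N-b) * ((wrE N f u).det).eval x *
            ((wrE N f v).det).eval x / (((wrM N f).det).eval x)^2 =
          (∫ x in (-1:ℝ)..1, h.eval x) + B₁ v - B₂ v) ∧
      (∀ v, (1-X)^a ∣ v → B₁ v = 0) ∧
      (∀ v, (1+X)^b ∣ v → B₂ v = 0) ∧
      (∀ W, f 0 * derivative u - derivative (f 0) * u = (1-X)^(a-1) * (1+X)^(b-1) * W →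
        B₁ (f 0) = (∏ i ∈ Finset.Ico 1 N, (l - lam i)) * W.eval 1 ∧
        B₂ (f 0) = (∏ i ∈ Finset.Ico 1 N, (l - lam i)) * W.eval (-1)) := by
  have hΩ0 : (wrM N f).det ≠ 0 := by
    intro h
    exact hΩ 0 (by norm_num) (by rw [h]; simp)
  obtain ⟨Bn, h1, h2, h3, h4⟩ := ej_transfer_K ejD (algebraMap ℝ[X] EJK) ejD_alg
    (IsFractionRing.injective ℝ[X] EJK) (fun _ => rfl) a b N ha hb haN hbN f lam hΩ0 hf u l hu
  have hn1 : (1 - X : ℝ[X]) ≠ 0 := by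
    intro h
    have := congrArg (eval 0) h
    simp at this
  have hn2 : (1 + X : ℝ[X]) ≠ 0 := by
    intro h
    have := congrArg (eval 0) h
    simp at this
  set Ω := (wrM N f).det with hΩd
  refine ⟨((eval 1 Ω)^(N+1))⁻¹ • ((Polynomial.leval (1:ℝ)).comp Bn),
    ((eval (-1) Ω)^(N+1))⁻¹ • ((Polynomial.leval (-1:ℝ)).comp Bn), ?_, ?_, ?_, ?_⟩
  · intro v h hh
    have e1 : (derivative (Bn v) * Ω - C ((N+1 : ℕ):ℝ) * Bn v * derivative Ω) * Ω =
        Ω ^ (N+1) * ((1-X)^(N-a) * (1+X)^(N-b) * (wrE N f u).det * (wrE N f v).det) -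
          Ω ^ (N+3) * h := by
      have hq : ((1-X)^a * (1+X)^b : ℝ[X]) ≠ 0 := mul_ne_zero (pow_ne_zero _ hn1) (pow_ne_zero _ hn2)
      apply mul_left_cancel₀ hq
      rw [← mul_assoc, h1 v]
      have q1 : (1-X:ℝ[X])^N = (1-X)^(N-a) * (1-X)^a := by rw [← pow_add]; congr 1; omega
      have q2 : (1+X:ℝ[X])^N = (1+X)^(N-b) * (1+X)^b := by rw [← pow_add]; congr 1; omega
      rw [q1, q2]
      linear_combination (- Ω^(N+3)) * hh
    have hcont : ∀ r : ℝ[X], Continuous fun x => eval x r := fun r => r.continuous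
    have hder : ∀ x ∈ Set.uIcc (-1:ℝ) 1, HasDerivAt (fun x => eval x (Bn v) / (eval x Ω)^(N+1))
        ((1-x)^(N-a) * (1+x)^(N-b) * ((wrE N f u).det).eval x *
            ((wrE N f v).det).eval x / (eval x Ω)^2 - h.eval x) x := by
      intro x hx
      rw [Set.uIcc_of_le (by norm_num)] at hx
      have hx0 := hΩ x hx
      have d1 := (Bn v).hasDerivAt x
      have d2 := (Ω.hasDerivAt x).pow (N+1)
      have d := d1.div d2 (pow_ne_zero _ hx0)
      refine d.congr_deriv ?_
      have e2 := congrArg (eval x) e1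
      simp only [eval_mul, eval_sub, eval_add, eval_pow, eval_C, eval_X, eval_one] at e2
      simp only [Nat.add_sub_cancel, Pi.pow_apply]
      have hk : ∀ R : ℝ, R / (eval x Ω)^2 * ((eval x Ω)^(N+1))^2 = R * (eval x Ω)^(2*N) := by
        intro R
        rw [div_mul_eq_mul_div, div_eq_iff (pow_ne_zero _ hx0)]; ring
      rw [div_eq_iff (pow_ne_zero _ (pow_ne_zero _ hx0)), sub_mul, hk]
      apply mul_left_cancel₀ hx0
      linear_combination (eval x Ω^N) * e2
    have hint1 : IntervalIntegrable (fun x => (1-x)^(N-a) * (1+x)^(N-b) * ((wrE N f u).det).eval x *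
            ((wrE N f v).det).eval x / (eval x Ω)^2) volume (-1) 1 := by
      apply ContinuousOn.intervalIntegrable
      apply ContinuousOn.div
      · apply Continuous.continuousOn
        have := hcont (wrE N f u).det
        have := hcont (wrE N f v).det
        fun_prop
      · exact ((hcont Ω).pow 2).continuousOn
      · intro x hx
        rw [Set.uIcc_of_le (by norm_num)] at hx
        exact pow_ne_zero _ (hΩ x hx)
    have hint2 : IntervalIntegrable (fun x => eval x h) volume (-1) 1 :=
      (hcont h).intervalIntegrable _ _
    have hF := intervalIntegral.integral_eq_sub_of_hasDerivAt hder (hint1.sub hint2)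
    rw [intervalIntegral.integral_sub hint1 hint2] at hF
    simp only [LinearMap.smul_apply, LinearMap.comp_apply, Polynomial.leval_apply, smul_eq_mul]
    rw [div_eq_inv_mul, div_eq_inv_mul] at hF
    linarith
  · intro v hv
    simp [h2 v hv]
  · intro v hv
    simp [h3 v hv]
  · intro W hW
    have e1 : Bn (f 0) = C (∏ i ∈ Finset.Ico 1 N, (l - lam i)) * Ω ^ (N+1) * W := by
      have hq : ((1-X)^(a-1) * (1+X)^(b-1) : ℝ[X]) ≠ 0 := mul_ne_zero (pow_ne_zero _ hn1) (pow_ne_zero _ hn2)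
      apply mul_left_cancel₀ hq
      rw [h4, hW]; ring
    have hx1 := hΩ 1 (by norm_num)
    have hx2 := hΩ (-1) (by norm_num)
    simp only [LinearMap.smul_apply, LinearMap.comp_apply, Polynomial.leval_apply, smul_eq_mul, e1,
      eval_mul, eval_C, eval_pow]
    constructor <;> field_simp
end ejint

noncomputable section ejjac
open Polynomial

lemma ejC2 : (C (2:ℝ)) = (2 : ℝ[X]) := rfl

def jTr (A B : ℝ) (y : ℝ[X]) : ℝ[X] :=
  (1 - X^2) * derivative (derivative y) + (C (B - A) - C (A + B + 2) * X) * derivative y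

def jcf (A B : ℝ) (n j : ℕ) : ℝ := genBinom ((n:ℝ) + A) j * genBinom ((n:ℝ) + B) (n - j)

def jS (A B : ℝ) (n : ℕ) : ℝ[X] :=
  ∑ j ∈ Finset.range (n+1), C (jcf A B n j) * ((X-1)^(n-j) * (X+1)^j)

def jP (A B : ℝ) (n : ℕ) : ℝ[X] := C ((2:ℝ)⁻¹^n) * jS A B n

lemma jP_eval (A B : ℝ) (n : ℕ) (x : ℝ) : (jP A B n).eval x = jacobiP A B n x := by
  unfold jP jS jacobiP jcf
  simp only [eval_mul, eval_C, eval_finset_sum, eval_pow, eval_sub, eval_add, eval_X, eval_one]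
  congr 1
  exact Finset.sum_congr rfl fun j _ => by ring

lemma genBinom_succ (z : ℝ) (k : ℕ) : genBinom z (k+1) * ((k:ℝ)+1) = genBinom z k * (z - k) := by
  unfold genBinom
  rw [Finset.prod_range_succ, Nat.factorial_succ]
  push_cast
  have : (k.factorial : ℝ) ≠ 0 := by positivity
  have : (k:ℝ) + 1 ≠ 0 := by positivity
  field_simp

lemma jcf_rec (A B : ℝ) (n j : ℕ) (hj : j < n) :
    jcf A B n j * ((n:ℝ) - j) * ((n:ℝ) - j + A) = jcf A B n (j+1) * ((j:ℝ)+1) * ((j:ℝ)+1+B) := by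
  unfold jcf
  obtain ⟨k, rfl⟩ : ∃ k, n = j + k + 1 := ⟨n - j - 1, by omega⟩
  have e1 := genBinom_succ (((j+k+1:ℕ):ℝ) + A) j
  have e2 := genBinom_succ (((j+k+1:ℕ):ℝ) + B) k
  rw [show j + k + 1 - j = k + 1 by omega, show j + k + 1 - (j+1) = k by omega]
  push_cast at *
  linear_combination (genBinom (↑j + ↑k + 1 + A) j * (k + 1 + A)) * e2 -
    (genBinom (↑j + ↑k + 1 + B) k * (j+1+B)) * e1

lemma jTr_term (A B : ℝ) (k j : ℕ) :
    jTr A B ((X-1)^k * (X+1)^j) =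
      - (C ((k:ℝ) * (k + A)) * ((X-1)^(k-1) * (X+1)^(j+1)) +
        C (2*(k:ℝ)*j + (A+1)*j + (B+1)*k) * ((X-1)^k * (X+1)^j) +
        C ((j:ℝ)*(j+B)) * ((X-1)^(k+1) * (X+1)^(j-1))) := by
  unfold jTr
  rcases k with _ | _ | k <;> rcases j with _ | _ | j <;>
    simp [derivative_mul, derivative_pow, ejC2] <;> ring

lemma jTr_add (A B : ℝ) (x y : ℝ[X]) : jTr A B (x + y) = jTr A B x + jTr A B y := by
  unfold jTr; simp; ring

lemma jTr_C_mul (A B c : ℝ) (x : ℝ[X]) : jTr A B (C c * x) = C c * jTr A B x := by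
  unfold jTr; simp; ring

lemma jTr_sum (A B : ℝ) (n : ℕ) (g : ℕ → ℝ[X]) :
    jTr A B (∑ j ∈ Finset.range n, g j) = ∑ j ∈ Finset.range n, jTr A B (g j) := by
  induction n with
  | zero => simp [jTr]
  | succ n ih => rw [Finset.sum_range_succ, Finset.sum_range_succ, jTr_add, ih]

lemma jS_ode (A B : ℝ) (n : ℕ) :
    jTr A B (jS A B n) = -C ((n:ℝ) * (n + A + B + 1)) * jS A B n := by
  have s1 : ∑ j ∈ Finset.range (n+1), C (jcf A B n j) * (C (((n-j:ℕ):ℝ) * ((n-j:ℕ) + A)) * ((X-1)^(n-j-1) * (X+1)^(j+1)))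
      = ∑ j ∈ Finset.range (n+1), C (jcf A B n j * ((j:ℝ)*(j+B))) * ((X-1)^(n-j) * (X+1)^j) := by
    rw [Finset.sum_range_succ, Finset.sum_range_succ' _ n]
    simp only [Nat.sub_self, CharP.cast_eq_zero, zero_mul, mul_zero, map_zero, add_zero]
    refine Finset.sum_congr rfl fun j hj => ?_
    have hj := Finset.mem_range.1 hj
    rw [← mul_assoc, ← C_mul, Nat.sub_sub]
    congr 2
    have := jcf_rec A B n j hj
    rw [Nat.cast_sub hj.le]
    push_cast
    linear_combination this
  have s2 : ∑ j ∈ Finset.range (n+1), C (jcf A B n j) * (C ((j:ℝ)*(j+B)) * ((X-1)^(n-j+1) * (X+1)^(j-1)))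
      = ∑ j ∈ Finset.range (n+1), C (jcf A B n j * (((n:ℝ)-j) * (n-j + A))) * ((X-1)^(n-j) * (X+1)^j) := by
    rw [Finset.sum_range_succ' _ n, Finset.sum_range_succ]
    simp only [sub_self, CharP.cast_eq_zero, zero_mul, mul_zero, map_zero, add_zero]
    refine Finset.sum_congr rfl fun j hj => ?_
    have hj := Finset.mem_range.1 hj
    rw [← mul_assoc, ← C_mul, show n - (j+1) + 1 = n - j by omega]
    congr 2
    have := jcf_rec A B n j hj
    push_cast
    linear_combination -this
  unfold jS
  rw [jTr_sum]
  simp only [jTr_C_mul, jTr_term]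
  have : ∀ j, C (jcf A B n j) *
        -(C (((n - j:ℕ):ℝ) * (((n - j:ℕ):ℝ) + A)) * ((X - 1) ^ (n - j - 1) * (X + 1) ^ (j + 1)) +
              C (2 * ((n - j:ℕ):ℝ) * ↑j + (A + 1) * ↑j + (B + 1) * ((n - j:ℕ):ℝ)) * ((X - 1) ^ (n - j) * (X + 1) ^ j) +
            C ((j:ℝ) * (↑j + B)) * ((X - 1) ^ (n - j + 1) * (X + 1) ^ (j - 1))) =
      -(C (jcf A B n j) * (C (((n - j:ℕ):ℝ) * (((n - j:ℕ):ℝ) + A)) * ((X - 1) ^ (n - j - 1) * (X + 1) ^ (j + 1))))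
      - C (jcf A B n j) * (C (2 * ((n - j:ℕ):ℝ) * ↑j + (A + 1) * ↑j + (B + 1) * ((n - j:ℕ):ℝ)) * ((X - 1) ^ (n - j) * (X + 1) ^ j))
      - C (jcf A B n j) * (C ((j:ℝ) * (↑j + B)) * ((X - 1) ^ (n - j + 1) * (X + 1) ^ (j - 1))) := by
    intro j; ring
  simp only [this]
  rw [Finset.sum_sub_distrib, Finset.sum_sub_distrib, Finset.sum_neg_distrib, s1, s2, Finset.mul_sum,
    ← Finset.sum_neg_distrib, ← Finset.sum_sub_distrib, ← Finset.sum_sub_distrib]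
  refine Finset.sum_congr rfl fun j hj => ?_
  have hj : j ≤ n := by have := Finset.mem_range.1 hj; omega
  rw [Nat.cast_sub hj]
  simp only [map_mul, map_add, map_sub, map_one, ejC2]
  ring

lemma jP_ode (A B : ℝ) (n : ℕ) :
    jTr A B (jP A B n) = -C ((n:ℝ) * (n + A + B + 1)) * jP A B n := by
  unfold jP
  rw [jTr_C_mul, jS_ode]; ring

lemma jP_deriv (A B : ℝ) (n : ℕ) :
    derivative (jP A B (n+1)) = C (((n:ℝ)+1 + A + B + 1)/2) * jP (A+1) (B+1) n := by
  have hS : derivative (jS A B (n+1)) = C ((n:ℝ)+1 + A + B + 1) * jS (A+1) (B+1) n := by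
    unfold jS
    rw [derivative_sum]
    have t : ∀ j, derivative (C (jcf A B (n+1) j) * ((X-1)^(n+1-j) * (X+1)^j)) =
        C (jcf A B (n+1) j * ((n+1-j:ℕ):ℝ)) * ((X-1)^(n-j) * (X+1)^j) +
        C (jcf A B (n+1) j * (j:ℝ)) * ((X-1)^(n+1-j) * (X+1)^(j-1)) := by
      intro j
      simp [derivative_mul, derivative_pow]
      rw [show n + 1 - j - 1 = n - j by omega]
      ring
    simp only [t]
    rw [Finset.sum_add_distrib, Finset.sum_range_succ, Finset.sum_range_succ' (fun j => C (jcf A B (n+1) j * (j:ℝ)) * ((X-1)^(n+1-j) * (X+1)^(j-1)))]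
    simp only [Nat.sub_self, CharP.cast_eq_zero, zero_mul, mul_zero, map_zero, add_zero]
    rw [← Finset.sum_add_distrib, Finset.mul_sum]
    refine Finset.sum_congr rfl fun j hj => ?_
    have hj : j < n + 1 := Finset.mem_range.1 hj
    obtain ⟨k, rfl⟩ : ∃ k, n = j + k := ⟨n - j, by omega⟩
    have e1 := genBinom_succ (((j+k+1:ℕ):ℝ) + A) j
    have e2 := genBinom_succ (((j+k+1:ℕ):ℝ) + B) k
    rw [show j + k + 1 - (j+1) = j + k - j by omega, Nat.add_sub_cancel, ← add_mul, ← mul_assoc (C _) (C _), ← C_mul, ← C_add]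
    congr 2
    unfold jcf
    rw [show j + k + 1 - j = k + 1 by omega, show j + k + 1 - (j+1) = k by omega, show j + k - j = k by omega]
    push_cast at *
    rw [show (j:ℝ) + k + (A+1) = j + k + 1 + A by ring, show (j:ℝ) + k + (B+1) = j + k + 1 + B by ring]
    linear_combination (genBinom (↑j + ↑k + 1 + A) j) * e2 +
      (genBinom (↑j + ↑k + 1 + B) k) * e1
  unfold jP
  rw [derivative_C_mul, hS, ← mul_assoc, ← mul_assoc, ← C_mul, ← C_mul]
  congr 2
  rw [pow_succ]; ring

lemma jP_one (A B : ℝ) (n : ℕ) : (jP A B n).eval 1 = genBinom ((n:ℝ) + A) n := by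
  unfold jP jS
  rw [eval_mul, eval_C, eval_finset_sum, Finset.sum_eq_single n]
  · simp [jcf, genBinom]
    rw [show (1:ℝ) + 1 = 2 by norm_num]
    field_simp
  · intro j hj hne
    have : n - j ≠ 0 := by have := Finset.mem_range.1 hj; omega
    simp [this]
  · simp

lemma jP_neg_one (A B : ℝ) (n : ℕ) : (jP A B n).eval (-1) = (-1)^n * genBinom ((n:ℝ) + B) n := by
  unfold jP jS
  rw [eval_mul, eval_C, eval_finset_sum, Finset.sum_eq_single 0]
  · simp [jcf, genBinom]
    rw [show (-1:ℝ) - 1 = (-1) * 2 by norm_num, mul_pow]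
    field_simp
  · intro j hj hne
    simp [hne]
  · simp

lemma jP_degree (A B : ℝ) (n : ℕ) : (jP A B n).natDegree ≤ n := by
  unfold jP jS
  refine (natDegree_C_mul_le _ _).trans (natDegree_sum_le_of_forall_le _ _ fun j hj => ?_)
  have hj := Finset.mem_range.1 hj
  refine (natDegree_C_mul_le _ _).trans (natDegree_mul_le.trans ?_)
  have h1 : ((X:ℝ[X])-1).natDegree ≤ 1 := by
    have := natDegree_X_sub_C_le (1:ℝ); simpa using this
  have h2 : ((X:ℝ[X])+1).natDegree ≤ 1 := by
    have := natDegree_X_add_C (1:ℝ); simpa using this.le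
  have := natDegree_pow_le_of_le (n-j) h1
  have := natDegree_pow_le_of_le j h2
  omega

end ejjac

noncomputable section ejnorm
open Polynomial

lemma ej_ftc (G : ℝ[X]) : ∫ x in (-1:ℝ)..1, (derivative G).eval x = G.eval 1 - G.eval (-1) :=
  intervalIntegral.integral_eq_sub_of_hasDerivAt (fun x _ => G.hasDerivAt x)
    ((derivative G).continuous.intervalIntegrable _ _)

lemma ej_pint (G : ℝ[X]) : IntervalIntegrable (fun x => G.eval x) volume (-1:ℝ) 1 :=
  G.continuous.intervalIntegrable _ _

lemma ej_beta (A B : ℕ) : ∫ x in (-1:ℝ)..1, ((1-X)^A * (1+X)^B : ℝ[X]).eval x =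
    2^(A+B+1) * (A.factorial : ℝ) * B.factorial / ((A+B+1).factorial : ℝ) := by
  induction A generalizing B with
  | zero =>
    have h := ej_ftc (C (((B:ℝ)+1)⁻¹) * (1+X)^(B+1))
    have hb : ((B:ℝ)+1) ≠ 0 := by positivity
    have e : derivative (C (((B:ℝ)+1)⁻¹) * (1+X)^(B+1)) = ((1-X)^0 * (1+X)^B : ℝ[X]) := by
      rw [derivative_C_mul, derivative_pow]
      simp only [Nat.add_sub_cancel]
      have : C (((B:ℝ)+1)⁻¹) * C ((B:ℝ)+1) = 1 := by rw [← C_mul, inv_mul_cancel₀ hb, C_1]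
      simp at this ⊢
      rw [← mul_assoc, this, one_mul]
    rw [e] at h
    rw [h]
    simp [Nat.factorial_succ]
    have : (B.factorial : ℝ) ≠ 0 := by positivity
    rw [show (1:ℝ) + 1 = 2 by norm_num]
    field_simp
  | succ A ih =>
    have h := ej_ftc ((1-X)^(A+1) * (1+X)^(B+1))
    have e : derivative ((1-X)^(A+1) * (1+X)^(B+1) : ℝ[X]) =
       C ((B:ℝ)+1) * ((1-X)^(A+1) * (1+X)^B) - C ((A:ℝ)+1) * ((1-X)^A * (1+X)^(B+1)) := by
      simp [derivative_mul, derivative_pow]; ring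
    rw [e] at h
    simp only [eval_sub (p := C ((B:ℝ)+1) * _), eval_C_mul] at h
    rw [intervalIntegral.integral_sub ((ej_pint _).const_mul _) ((ej_pint _).const_mul _),
      intervalIntegral.integral_const_mul, intervalIntegral.integral_const_mul, ih (B+1)] at h
    simp at h
    have hb : ((B:ℝ)+1) ≠ 0 := by positivity
    apply mul_left_cancel₀ hb
    rw [sub_eq_zero] at h
    simp only [eval_mul, eval_pow, eval_sub, eval_add, eval_one, eval_X]
    rw [h, show A + 1 + B + 1 = A + (B+1) + 1 by ring, Nat.factorial_succ A, Nat.factorial_succ B]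
    push_cast; ring

lemma ej_ladder (A B n : ℕ) :
    ((n:ℝ)+1) * ((n:ℝ)+1+A+B+1) * ∫ x in (-1:ℝ)..1, ((1-X)^A * (1+X)^B * (jP A B (n+1))^2 : ℝ[X]).eval x =
    (((n:ℝ)+1+A+B+1)/2)^2 * ∫ x in (-1:ℝ)..1,
      ((1-X)^(A+1) * (1+X)^(B+1) * (jP ((A+1:ℕ):ℝ) ((B+1:ℕ):ℝ) n)^2 : ℝ[X]).eval x := by
  set y := jP (A:ℝ) (B:ℝ) (n+1) with hy
  have h := ej_ftc ((1-X)^(A+1) * (1+X)^(B+1) * derivative y * y)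
  have hd : derivative y = C (((n:ℝ)+1 + A + B + 1)/2) * jP ((A+1:ℕ):ℝ) ((B+1:ℕ):ℝ) n := by
    rw [hy, jP_deriv]; push_cast; rfl
  have ho := jP_ode (A:ℝ) (B:ℝ) (n+1)
  rw [← hy] at ho
  unfold jTr at ho
  have e : derivative ((1-X)^(A+1) * (1+X)^(B+1) * derivative y * y : ℝ[X]) =
     C ((((n:ℝ)+1+A+B+1)/2)^2) * ((1-X)^(A+1) * (1+X)^(B+1) * (jP ((A+1:ℕ):ℝ) ((B+1:ℕ):ℝ) n)^2)
      - C (((n:ℝ)+1) * ((n:ℝ)+1+A+B+1)) * ((1-X)^A * (1+X)^B * y^2) := by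
    have e1 : derivative ((1-X)^(A+1) * (1+X)^(B+1) * derivative y * y : ℝ[X]) =
      (1-X)^A * (1+X)^B * ((1 - X^2) * derivative (derivative y) +
        (C ((B:ℝ) - A) - C ((A:ℝ) + B + 2) * X) * derivative y) * y +
        (1-X)^(A+1) * (1+X)^(B+1) * (derivative y)^2 := by
      simp [derivative_mul, derivative_pow, ejC2]; ring
    rw [e1, ho]
    rw [hd]
    simp [C_mul, C_pow, ejC2]; ring
  rw [e] at h
  simp only [eval_sub (p := C _ * _), eval_C_mul] at h
  rw [intervalIntegral.integral_sub ((ej_pint _).const_mul _) ((ej_pint _).const_mul _),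
      intervalIntegral.integral_const_mul, intervalIntegral.integral_const_mul] at h
  have h0 : eval 1 ((1-X)^(A+1) * (1+X)^(B+1) * derivative y * y : ℝ[X]) -
     eval (-1) ((1-X)^(A+1) * (1+X)^(B+1) * derivative y * y : ℝ[X]) = 0 := by simp
  rw [h0] at h
  linarith

lemma ej_norm (n A B : ℕ) : ∫ x in (-1:ℝ)..1, ((1-X)^A * (1+X)^B * (jP A B n)^2 : ℝ[X]).eval x =
    2^(A+B+1) / (2*n+A+B+1) * ((n+A).factorial * (n+B).factorial / (n.factorial * (n+A+B).factorial)) := by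
  induction n generalizing A B with
  | zero =>
    have : jP (A:ℝ) (B:ℝ) 0 = 1 := by simp [jP, jS, jcf, genBinom]
    rw [this, one_pow, mul_one, ej_beta, Nat.factorial_succ]
    have : ((A+B).factorial : ℝ) ≠ 0 := by positivity
    have : ((A+B+1 : ℕ) : ℝ) ≠ 0 := by positivity
    push_cast at *
    simp
    field_simp
  | succ n ih =>
    have h := ej_ladder A B n
    rw [ih (A+1) (B+1)] at h
    have h1 : ((n:ℝ)+1) * ((n:ℝ)+1+A+B+1) ≠ 0 := by positivity
    apply mul_left_cancel₀ h1
    rw [h]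
    rw [show n + (A+1) + (B+1) = (n+1+A+B) + 1 by ring, Nat.factorial_succ (n+1+A+B), Nat.factorial_succ n,
      show n + (A+1) = n+1+A by ring, show n + (B+1) = n+1+B by ring]
    have : ((n+1+A+B).factorial : ℝ) ≠ 0 := by positivity
    have : (n.factorial : ℝ) ≠ 0 := by positivity
    have : (n:ℝ)+1+A+B+1 ≠ 0 := by positivity
    have : (2*((n:ℝ)+1)+A+B+1) ≠ 0 := by positivity
    have : (2*(n:ℝ)+(A+1)+(B+1)+1) ≠ 0 := by positivity
    push_cast
    field_simp
    ring

lemma genBinom_nat (m k : ℕ) : genBinom (m:ℝ) k = (m.choose k : ℝ) := by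
  induction k with
  | zero => simp [genBinom]
  | succ k ih =>
    have h := genBinom_succ (m:ℝ) k
    have hk : (k:ℝ) + 1 ≠ 0 := by positivity
    apply mul_right_cancel₀ hk
    rw [h, ih]
    rcases Nat.lt_or_ge m k with hm | hm
    · rw [Nat.choose_eq_zero_of_lt hm, Nat.choose_eq_zero_of_lt (by omega)]; simp
    · have := Nat.choose_succ_right_eq m k
      rw [← Nat.cast_sub hm]
      exact_mod_cast this.symm

lemma jP_neg (a b m : ℕ) : jP (-(a:ℝ)) (-(b:ℝ)) (m+a+b) =
    C ((2:ℝ)⁻¹^(a+b)) * ((X-1)^a * (X+1)^b * jP (a:ℝ) (b:ℝ) m) := by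
  have hS : jS (-(a:ℝ)) (-(b:ℝ)) (m+a+b) = (X-1)^a * (X+1)^b * jS (a:ℝ) (b:ℝ) m := by
    unfold jS
    have hc : ∀ j, jcf (-(a:ℝ)) (-(b:ℝ)) (m+a+b) j = ((m+b).choose j : ℝ) * ((m+a).choose (m+a+b-j) : ℝ) := by
      intro j
      unfold jcf
      rw [← genBinom_nat, ← genBinom_nat]
      congr 2 <;> (push_cast; ring)
    simp only [hc]
    rw [show m + a + b + 1 = b + (m+1) + a by ring, Finset.sum_range_add, Finset.sum_range_add]
    rw [Finset.sum_eq_zero (s := Finset.range b), Finset.sum_eq_zero (s := Finset.range a), zero_add, add_zero, Finset.mul_sum]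
    · refine Finset.sum_congr rfl fun j hj => ?_
      have hj : j ≤ m := by have := Finset.mem_range.1 hj; omega
      have q : jcf (a:ℝ) (b:ℝ) m j = ((m+b).choose (b+j) : ℝ) * ((m+a).choose (m+a+b-(b+j)) : ℝ) := by
        unfold jcf
        rw [← Nat.cast_add, ← Nat.cast_add, genBinom_nat, genBinom_nat]
        rw [mul_comm]
        congr 2
        · exact_mod_cast Nat.choose_symm_of_eq_add (by omega)
        · exact_mod_cast Nat.choose_symm_of_eq_add (by omega)
      rw [q, show m + a + b - (b+j) = a + (m - j) by omega, pow_add, pow_add]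
      ring
    · intro j hj
      rw [Nat.choose_eq_zero_of_lt (by omega)]; simp
    · intro j hj
      have := Finset.mem_range.1 hj
      rw [Nat.choose_eq_zero_of_lt (n := m+a) (by omega)]; simp
  unfold jP
  rw [hS, show m + a + b = (a+b)+m by ring, pow_add, C_mul]; ring

lemma jP_neg_dvd (a b n : ℕ) (hn : a + b ≤ n) :
    (1-X)^a * (1+X)^b ∣ jP (-(a:ℝ)) (-(b:ℝ)) n := by
  obtain ⟨m, rfl⟩ : ∃ m, n = m + a + b := ⟨n - a - b, by omega⟩
  rw [jP_neg]
  refine Dvd.dvd.mul_left ⟨(-1)^a * jP a b m, ?_⟩ _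
  rw [show (X - 1 : ℝ[X]) = (-1) * (1-X) by ring, mul_pow]; ring

lemma jP_neg_norm (a b n : ℕ) (hn : a + b ≤ n) : ∃ h : ℝ[X],
    jP (-(a:ℝ)) (-(b:ℝ)) n * jP (-(a:ℝ)) (-(b:ℝ)) n = (1-X)^a * (1+X)^b * h ∧
    ∫ x in (-1:ℝ)..1, h.eval x = 2 / 2^(a+b) / (2*n-a-b+1) *
      ((n-b).factorial * (n-a).factorial / ((n-a-b).factorial * n.factorial)) := by
  obtain ⟨m, rfl⟩ : ∃ m, n = m + a + b := ⟨n - a - b, by omega⟩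
  refine ⟨C (((2:ℝ)⁻¹^(a+b))^2) * ((1-X)^a * (1+X)^b * (jP a b m)^2), ?_, ?_⟩
  · rw [jP_neg, show (X - 1 : ℝ[X]) = (-1) * (1-X) by ring, mul_pow]
    simp only [C_pow]
    have : ((-1:ℝ[X])^a)*(-1)^a = 1 := by rw [← mul_pow]; simp
    linear_combination ((C ((2:ℝ)⁻¹)^(a+b))^2 * (1-X)^a * (1+X)^b * (jP a b m)^2 * (1-X)^a * (1+X)^b) * this
  · simp only [eval_C_mul]
    rw [intervalIntegral.integral_const_mul, ej_norm]
    rw [show m + a + b - b = m + a by omega, show m + a + b - a = m + b by omega, show m + b - b = m by omega]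
    have : (2*(m:ℝ)+a+b+1) ≠ 0 := by positivity
    push_cast
    rw [show (2 * ((m:ℝ) + a + b) - a - b + 1) = 2 * m + a + b + 1 by ring, inv_pow]
    field_simp
    ring
end ejnorm

noncomputable section ejhat
open Polynomial

lemma jT_eq (a b : ℕ) (y : ℝ[X]) : jT a b y = jTr (-(a:ℝ)) (-(b:ℝ)) y := by
  unfold jT jTr
  rw [show -(b:ℝ) - -(a:ℝ) = (a:ℝ) - b by ring, show -(a:ℝ) + -(b:ℝ) + 2 = -((a:ℝ)+b-2) by ring, C_neg]
  ring

lemma jT_add (a b : ℕ) (x y : ℝ[X]) : jT a b (x + y) = jT a b x + jT a b y := by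
  simp only [jT_eq, jTr_add]

lemma jT_C_mul (a b : ℕ) (c : ℝ) (x : ℝ[X]) : jT a b (C c * x) = C c * jT a b x := by
  simp only [jT_eq, jTr_C_mul]

lemma jT_sub (a b : ℕ) (x y : ℝ[X]) : jT a b (x - y) = jT a b x - jT a b y := by
  rw [show x - y = x + C (-1) * y by rw [C_neg, C_1]; ring, jT_add, jT_C_mul, C_neg, C_1]
  ring

def jl (a b : ℕ) (n : ℕ) : ℝ := (n:ℝ) * (n - a - b + 1)

lemma jT_jP (a b n : ℕ) : jT a b (jP (-(a:ℝ)) (-(b:ℝ)) n) = -C (jl a b n) * jP (-(a:ℝ)) (-(b:ℝ)) n := by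
  rw [jT_eq, jP_ode]
  unfold jl
  congr 3

lemma jl_symm (a b n m : ℕ) (h : n + m + 1 = a + b) : jl a b n = jl a b m := by
  unfold jl
  have : (n:ℝ) + m + 1 = a + b := by exact_mod_cast h
  have h1 : (n:ℝ) = a + b - 1 - m := by linarith
  rw [h1]; ring

lemma ej_exp_one (a b : ℕ) (l : ℝ) (y : ℝ[X]) (hy : jT a b y = -C l * y) (h1 : y.eval 1 = 0) :
    (1-X)^a ∣ y := by
  have hX : (1 - X : ℝ[X]) ≠ 0 := by
    intro h
    have := congrArg (eval 0) h
    simp at this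
  have hdv : ∀ g : ℝ[X], g.eval 1 = 0 → (1 - X) ∣ g := by
    intro g hg
    have : X - C 1 ∣ g := dvd_iff_isRoot.2 hg
    rw [show (1 - X : ℝ[X]) = -(X - C 1) by simp]
    exact (neg_dvd).2 this
  have key : ∀ k, k + 1 ≤ a → (1-X)^(k+1) ∣ y := by
    intro k
    induction k with
    | zero => intro _; simpa using hdv y h1
    | succ k ih =>
      intro hk
      obtain ⟨g, rfl⟩ := ih (by omega)
      rw [pow_succ (1-X : ℝ[X]) (k+1)]
      refine mul_dvd_mul_left _ (hdv g ?_)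
      have e : (1-X)^k * ((1+X) * (C ((k:ℝ)+1) * C (k:ℝ) * g - C 2 * C ((k:ℝ)+1) * (1-X) * derivative g + (1-X)^2 * derivative (derivative g))
        + (C ((a:ℝ) - b) + C ((a:ℝ)+b-2) * X) * (- C ((k:ℝ)+1) * g + (1-X) * derivative g) + C l * (1-X) * g) = 0 := by
        unfold jT at hy
        have : (1-X)^k * ((1+X) * (C ((k:ℝ)+1) * C (k:ℝ) * g - C 2 * C ((k:ℝ)+1) * (1-X) * derivative g + (1-X)^2 * derivative (derivative g))
        + (C ((a:ℝ) - b) + C ((a:ℝ)+b-2) * X) * (- C ((k:ℝ)+1) * g + (1-X) * derivative g) + C l * (1-X) * g)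
          = ((1 - X^2) * derivative (derivative ((1-X)^(k+1) * g)) +
    (C ((a:ℝ) - b) + C ((a:ℝ) + b - 2) * X) * derivative ((1-X)^(k+1) * g)) + C l * ((1-X)^(k+1) * g) := by
          rcases k with _ | k
          · simp [derivative_mul, derivative_pow, ejC2]; ring
          · simp [derivative_mul, derivative_pow, ejC2]; ring
        rw [this, hy]; ring
      have e2 := (mul_eq_zero.1 e).resolve_left (pow_ne_zero _ hX)
      have e3 := congrArg (eval 1) e2
      simp at e3
      have hak : ((k:ℝ) + 2) ≤ a := by exact_mod_cast hk
      have : ((k:ℝ)+1) * (2 * ((k:ℝ)+1 - a)) * eval 1 g = 0 := by linear_combination e3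
      have h2 : ((k:ℝ)+1) * (2 * ((k:ℝ)+1 - a)) ≠ 0 := by
        refine mul_ne_zero (by positivity) (mul_ne_zero two_ne_zero ?_)
        linarith
      exact (mul_eq_zero.1 this).resolve_left h2
  rcases a with _ | a
  · simp
  · exact key a le_rfl

lemma ej_exp_neg (a b : ℕ) (l : ℝ) (y : ℝ[X]) (hy : jT a b y = -C l * y) (h1 : y.eval (-1) = 0) :
    (1+X)^b ∣ y := by
  have hX : (1 + X : ℝ[X]) ≠ 0 := by
    intro h
    have := congrArg (eval 0) h
    simp at this
  have hdv : ∀ g : ℝ[X], g.eval (-1) = 0 → (1 + X) ∣ g := by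
    intro g hg
    have : X - C (-1) ∣ g := dvd_iff_isRoot.2 hg
    rw [show (1 + X : ℝ[X]) = (X - C (-1)) by simp; ring]
    exact this
  have key : ∀ k, k + 1 ≤ b → (1+X)^(k+1) ∣ y := by
    intro k
    induction k with
    | zero => intro _; simpa using hdv y h1
    | succ k ih =>
      intro hk
      obtain ⟨g, rfl⟩ := ih (by omega)
      rw [pow_succ (1+X : ℝ[X]) (k+1)]
      refine mul_dvd_mul_left _ (hdv g ?_)
      have e : (1+X)^k * ((1-X) * (C ((k:ℝ)+1) * C (k:ℝ) * g + C 2 * C ((k:ℝ)+1) * (1+X) * derivative g + (1+X)^2 * derivative (derivative g))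
        + (C ((a:ℝ) - b) + C ((a:ℝ)+b-2) * X) * (C ((k:ℝ)+1) * g + (1+X) * derivative g) + C l * (1+X) * g) = 0 := by
        unfold jT at hy
        have : (1+X)^k * ((1-X) * (C ((k:ℝ)+1) * C (k:ℝ) * g + C 2 * C ((k:ℝ)+1) * (1+X) * derivative g + (1+X)^2 * derivative (derivative g))
        + (C ((a:ℝ) - b) + C ((a:ℝ)+b-2) * X) * (C ((k:ℝ)+1) * g + (1+X) * derivative g) + C l * (1+X) * g)
          = ((1 - X^2) * derivative (derivative ((1+X)^(k+1) * g)) +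
    (C ((a:ℝ) - b) + C ((a:ℝ) + b - 2) * X) * derivative ((1+X)^(k+1) * g)) + C l * ((1+X)^(k+1) * g) := by
          rcases k with _ | k
          · simp [derivative_mul, derivative_pow, ejC2]; ring
          · simp [derivative_mul, derivative_pow, ejC2]; ring
        rw [this, hy]; ring
      have e2 := (mul_eq_zero.1 e).resolve_left (pow_ne_zero _ hX)
      have e3 := congrArg (eval (-1)) e2
      simp at e3
      have hak : ((k:ℝ) + 2) ≤ b := by exact_mod_cast hk
      have : ((k:ℝ)+1) * (2 * ((k:ℝ)+1 - b)) * eval (-1) g = 0 := by linear_combination e3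
      have h2 : ((k:ℝ)+1) * (2 * ((k:ℝ)+1 - b)) ≠ 0 := by
        refine mul_ne_zero (by positivity) (mul_ne_zero two_ne_zero ?_)
        linarith
      exact (mul_eq_zero.1 this).resolve_left h2
  rcases b with _ | b
  · simp
  · exact key b le_rfl

def jZ : ℝ[X] := C (1/2) * (1 - X)

lemma jT_conj (a b : ℕ) (y : ℝ[X]) :
    jT a b ((1-X)^a * y) = (1-X)^a * (jTr a (-(b:ℝ)) y + C ((a:ℝ) * (b-1)) * y) := by
  unfold jT jTr
  rcases a with _ | _ | a
  · simp [ejC2]; left; ring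
  · simp [derivative_mul, derivative_pow, ejC2]; ring
  · simp [derivative_mul, derivative_pow, ejC2]; ring

def jQ (a b m : ℕ) : ℝ[X] := jZ^a * jP (a:ℝ) (-(b:ℝ)) m

lemma jQ_eq (a b m : ℕ) : jQ a b m = C ((1/2)^a) * ((1-X)^a * jP (a:ℝ) (-(b:ℝ)) m) := by
  unfold jQ jZ
  rw [mul_pow, C_pow]; ring

lemma jT_jQ (a b m n : ℕ) (h : n + m + 1 = b) : jT a b (jQ a b m) = -C (jl a b n) * jQ a b m := by
  rw [jQ_eq, jT_C_mul, jT_conj, jP_ode]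
  have hb : (b:ℝ) = n + m + 1 := by exact_mod_cast h.symm
  have : jl a b n = (m:ℝ) * (m + a + -(b:ℝ) + 1) - (a:ℝ) * (b-1) := by
    unfold jl; rw [hb]; ring
  rw [this, C_sub]; ring
end ejhat

noncomputable section ejphi
open Polynomial

def gq (a b u j : ℕ) (s : ℝ) : ℝ :=
  poch (-(u:ℝ)) j * poch ((u:ℝ) - s + -(a:ℝ) + -(b:ℝ) + 1) j / (poch (-(a:ℝ) - s + 1) j * (j.factorial : ℝ))

lemma poch_succ (z : ℝ) (j : ℕ) : poch z (j+1) = poch z j * (z + j) := by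
  unfold poch; rw [Finset.prod_range_succ]

lemma gq_succ (a b u j : ℕ) (s : ℝ) : gq a b u (j+1) s =
    gq a b u j s * (((j:ℝ)-u) * ((u:ℝ) - s - a - b + 1 + j) / ((-(a:ℝ) - s + 1 + j) * ((j:ℝ)+1))) := by
  unfold gq
  rw [poch_succ, poch_succ, poch_succ, Nat.factorial_succ, div_mul_div_comm]
  push_cast
  congr 1 <;> ring

lemma poch_neg_zero (u j : ℕ) (h : u < j) : poch (-(u:ℝ)) j = 0 := by
  unfold poch
  exact Finset.prod_eq_zero (Finset.mem_range.2 h) (by ring)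

lemma gq_zero (a b u j : ℕ) (h : u < j) (s : ℝ) : gq a b u j s = 0 := by
  unfold gq; rw [poch_neg_zero u j h]; simp

def dg (a b u j : ℕ) : ℝ := deriv (gq a b u j) 0

lemma gr_deriv (a b u j : ℕ) (h : j + 2 ≤ a) :
    HasDerivAt (fun s : ℝ => ((j:ℝ)-u) * ((u:ℝ) - s - a - b + 1 + j) / ((-(a:ℝ) - s + 1 + j) * ((j:ℝ)+1)))
      (((j:ℝ)-u) / ((j:ℝ)+1) * (((u:ℝ) - b) / (-(a:ℝ) + 1 + j)^2)) 0 := by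
  have hd : (-(a:ℝ) + 1 + j) ≠ 0 := by
    have : (j:ℝ) + 2 ≤ a := by exact_mod_cast h
    linarith
  have hj : (j:ℝ) + 1 ≠ 0 := by positivity
  have i := hasDerivAt_id (0:ℝ)
  have h1 : HasDerivAt (fun s : ℝ => ((j:ℝ)-u) * ((u:ℝ) - s - a - b + 1 + j)) (((j:ℝ)-u) * (-1)) 0 := by
    refine HasDerivAt.const_mul _ ?_
    have := ((((i.const_sub (u:ℝ)).sub_const (a:ℝ)).sub_const (b:ℝ)).add_const (1:ℝ)).add_const (j:ℝ)
    simpa using this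
  have h2 : HasDerivAt (fun s : ℝ => (-(a:ℝ) - s + 1 + j) * ((j:ℝ)+1)) ((-1) * ((j:ℝ)+1)) 0 := by
    refine HasDerivAt.mul_const ?_ _
    have := (((i.const_sub (-(a:ℝ)))).add_const (1:ℝ)).add_const (j:ℝ)
    simpa using this
  have hd' : (-(a:ℝ) - 0 + 1 + j) ≠ 0 := by simpa using hd
  have := h1.div h2 (mul_ne_zero hd' hj)
  refine this.congr_deriv ?_
  simp only [sub_zero]
  field_simp
  ring

lemma gq_diff (a b u j : ℕ) (h : j + 1 ≤ a) : DifferentiableAt ℝ (gq a b u j) 0 := by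
  induction j with
  | zero =>
    have : gq a b u 0 = fun _ => 1 := by funext s; simp [gq, poch]
    rw [this]; exact differentiableAt_const _
  | succ j ih =>
    have : gq a b u (j+1) = fun s => _ := funext fun s => gq_succ a b u j s
    rw [this]
    exact (ih (by omega)).mul (gr_deriv a b u j (by omega)).differentiableAt

lemma gq_rec (a b u j : ℕ) (hu : u + 1 ≤ a) (h : j ≤ u) :
    gq a b u (j+1) 0 * (((j:ℝ)+1) * ((j:ℝ)+1-a)) = gq a b u j 0 * (((j:ℝ)-u) * ((j:ℝ) + u - a - b + 1)) := by
  rcases Nat.lt_or_ge j u with hj | hj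
  · have hd : ((j:ℝ)+1-a) ≠ 0 := by
      have : (j:ℝ) + 2 ≤ a := by exact_mod_cast (by omega : j + 2 ≤ a)
      linarith
    have hd2 : (-(a:ℝ)+1+j) ≠ 0 := by intro h; apply hd; linarith
    have hj : (j:ℝ) + 1 ≠ 0 := by positivity
    rw [gq_succ, sub_zero, sub_zero]
    field_simp
    ring
  · obtain rfl : j = u := by omega
    rw [gq_zero a b j (j+1) (by omega)]; simp

lemma dg_rec (a b u j : ℕ) (hu : u + 1 ≤ a) (h : j ≤ u) :
    dg a b u (j+1) * (((j:ℝ)+1) * ((j:ℝ)+1-a)) = dg a b u j * (((j:ℝ)-u) * ((j:ℝ) + u - a - b + 1))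
      + ((j:ℝ)+1) * gq a b u (j+1) 0 - ((j:ℝ)-u) * gq a b u j 0 := by
  rcases Nat.lt_or_ge j u with hj | hj
  · have hd : ((j:ℝ)+1-a) ≠ 0 := by
      have : (j:ℝ) + 2 ≤ a := by exact_mod_cast (by omega : j + 2 ≤ a)
      linarith
    have hd2 : (-(a:ℝ)+1+j) ≠ 0 := by intro h; apply hd; linarith
    have hj1 : (j:ℝ) + 1 ≠ 0 := by positivity
    have hg := (gq_diff a b u j (by omega)).hasDerivAt.mul (gr_deriv a b u j (by omega))
    have : gq a b u (j+1) = gq a b u j * (fun s : ℝ => ((j:ℝ)-u) * ((u:ℝ) - s - a - b + 1 + j) / ((-(a:ℝ) - s + 1 + j) * ((j:ℝ)+1))) :=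
      funext fun s => gq_succ a b u j s
    have e := hg.deriv
    rw [← this] at e
    have e1 : dg a b u (j+1) = _ := e
    rw [e1, gq_succ, sub_zero, sub_zero]
    change (dg a b u j * _ + _) * _ = _
    field_simp
    ring
  · obtain rfl : j = u := by omega
    have h0 : gq a b j (j+1) = fun _ => 0 := funext fun s => gq_zero a b j (j+1) (by omega) s
    unfold dg
    rw [h0]; simp

lemma jT_Ypow (a b j : ℕ) :
    jT a b ((1-X)^j) = C (2*((j:ℝ)*((j:ℝ)-a))) * (1-X)^(j-1) - C ((j:ℝ) * ((j:ℝ)-a-b+1)) * (1-X)^j := by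
  unfold jT
  rcases j with _ | _ | j
  · simp
  · simp [ejC2]; ring
  · simp [derivative_mul, derivative_pow, ejC2]; ring

lemma jT_Zpow (a b j : ℕ) :
    jT a b (jZ^j) = C ((j:ℝ)*((j:ℝ)-a)) * jZ^(j-1) - C ((j:ℝ) * ((j:ℝ)-a-b+1)) * jZ^j := by
  have h : ∀ k, jZ^k = C ((1/2)^k) * (1-X)^k := by intro k; unfold jZ; rw [mul_pow, C_pow]
  rw [h, h, jT_C_mul, jT_Ypow, mul_sub]
  simp only [← mul_assoc (C _) (C _), ← C_mul]
  rcases j with _ | j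
  · simp
  · rw [Nat.add_sub_cancel]
    refine congrArg₂ (· - ·) (congrArg (fun t => C t * _) ?_) (congrArg (fun t => C t * _) ?_)
    · rw [pow_succ]; ring
    · ring

lemma jT_sum (a b n : ℕ) (g : ℕ → ℝ[X]) :
    jT a b (∑ j ∈ Finset.range n, g j) = ∑ j ∈ Finset.range n, jT a b (g j) := by
  simp only [jT_eq, jTr_sum]

def jser (y : ℕ → ℝ) (u : ℕ) : ℝ[X] := ∑ j ∈ Finset.range (u+1), C (y j) * jZ^j

lemma jT_ser (a b : ℕ) (y : ℕ → ℝ) (u : ℕ) (hy : y (u+1) = 0) (l : ℝ) (z : ℕ → ℝ)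
    (h : ∀ j ≤ u, y (j+1) * (((j:ℝ)+1) * ((j:ℝ)+1-a)) = y j * ((j:ℝ)*((j:ℝ)-a-b+1) - l) + z j) :
    jT a b (jser y u) = -C l * jser y u + jser z u := by
  unfold jser
  rw [jT_sum]
  simp only [jT_C_mul, jT_Zpow]
  have hms : ∀ j : ℕ, C (y j) * (C ((j:ℝ)*((j:ℝ)-a)) * jZ^(j-1) - C ((j:ℝ) * ((j:ℝ)-a-b+1)) * jZ^j) =
    C (y j) * (C ((j:ℝ)*((j:ℝ)-a)) * jZ^(j-1)) - C (y j) * (C ((j:ℝ) * ((j:ℝ)-a-b+1)) * jZ^j) := fun j => mul_sub _ _ _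
  simp only [hms]
  rw [Finset.sum_sub_distrib, Finset.sum_range_succ']
  simp only [CharP.cast_eq_zero, zero_mul, map_zero, mul_zero, add_zero]
  have e : ∑ j ∈ Finset.range u, C (y (j+1)) * (C (((j+1:ℕ):ℝ) * (((j+1:ℕ):ℝ) - a)) * jZ^(j+1-1)) =
      ∑ j ∈ Finset.range (u+1), C (y (j+1)) * (C (((j+1:ℕ):ℝ) * (((j+1:ℕ):ℝ) - a)) * jZ^j) := by
    rw [Finset.sum_range_succ, hy]; simp
  rw [e, Finset.mul_sum, ← Finset.sum_add_distrib, ← Finset.sum_sub_distrib]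
  refine Finset.sum_congr rfl fun j hj => ?_
  have hj : j ≤ u := by have := Finset.mem_range.1 hj; omega
  have h1 := congrArg (C : ℝ → ℝ[X]) (h j hj)
  push_cast
  simp only [C_add, C_mul, C_sub] at h1 ⊢
  linear_combination jZ^j * h1

end ejphi

noncomputable section ejphib
open Polynomial

lemma jser_g (a b u : ℕ) (hu : u + 1 ≤ a) :
    jT a b (jser (fun j => gq a b u j 0) u) = -C (jl a b u) * jser (fun j => gq a b u j 0) u := by
  have := jT_ser a b (fun j => gq a b u j 0) u (gq_zero a b u _ (by omega) 0) (jl a b u) (fun _ => 0)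
    (fun j hj => by
      rw [gq_rec a b u j hu hj]; unfold jl; ring)
  rw [this]
  have : jser (fun _ => 0) u = 0 := by unfold jser; simp
  rw [this, add_zero]

lemma jser_dg (a b u : ℕ) (hu : u + 1 ≤ a) :
    jT a b (jser (dg a b u) u) = -C (jl a b u) * jser (dg a b u) u +
      jser (fun j => ((j:ℝ)+1) * gq a b u (j+1) 0 - ((j:ℝ)-u) * gq a b u j 0) u := by
  refine jT_ser a b (dg a b u) u ?_ (jl a b u) _ (fun j hj => by
      rw [dg_rec a b u j hu hj]; unfold jl; ring)
  have h0 : gq a b u (u+1) = fun _ => 0 := funext fun s => gq_zero a b u (u+1) (by omega) s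
  unfold dg
  rw [h0]; simp

lemma gq_symm (a b u v j : ℕ) (h : u + v + 1 = a + b) : gq a b u j 0 = gq a b v j 0 := by
  have h' : (u:ℝ) + v + 1 = a + b := by exact_mod_cast h
  unfold gq
  rw [show (u:ℝ) - 0 + -(a:ℝ) + -(b:ℝ) + 1 = -(v:ℝ) by linarith,
    show (v:ℝ) - 0 + -(a:ℝ) + -(b:ℝ) + 1 = -(u:ℝ) by linarith, mul_comm (poch (-(u:ℝ)) j)]

lemma jser_natDegree (y : ℕ → ℝ) (u : ℕ) : (jser y u).natDegree ≤ u := by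
  unfold jser
  refine natDegree_sum_le_of_forall_le _ _ fun j hj => ?_
  have hj : j ≤ u := by have := Finset.mem_range.1 hj; omega
  have h1 : jZ.natDegree ≤ 1 := by unfold jZ; compute_degree
  refine (natDegree_C_mul_le _ _).trans (natDegree_pow_le.trans ?_)
  calc j * jZ.natDegree ≤ j * 1 := Nat.mul_le_mul_left _ h1
    _ ≤ u := by omega

lemma jP_one_ne (a b u : ℕ) (hu : u + 1 ≤ a) : (jP (-(a:ℝ)) (-(b:ℝ)) u).eval 1 ≠ 0 := by
  rw [jP_one]
  unfold genBinom
  refine div_ne_zero (Finset.prod_ne_zero_iff.2 fun i _ => ?_) (by positivity)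
  have : (u:ℝ) + 1 ≤ a := by exact_mod_cast hu
  have : (0:ℝ) ≤ i := by positivity
  intro h; linarith

lemma jser_prop (a b u : ℕ) (hu : u + 1 ≤ a) :
    ∃ c, jser (fun j => gq a b u j 0) u = C c * jP (-(a:ℝ)) (-(b:ℝ)) u := by
  set P := jP (-(a:ℝ)) (-(b:ℝ)) u with hP
  set S := jser (fun j => gq a b u j 0) u with hS
  have hp := jP_one_ne a b u hu
  rw [← hP] at hp
  set y := S - C (S.eval 1 / P.eval 1) * P with hy
  have e : jT a b y = -C (jl a b u) * y := by
    rw [hy, jT_sub, jT_C_mul, hS, jser_g a b u hu, hP, jT_jP]; ring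
  have e1 : y.eval 1 = 0 := by
    rw [hy]; simp [div_mul_cancel₀ _ hp]
  have hd := ej_exp_one a b _ y e e1
  have hdeg : y.natDegree ≤ u := by
    refine (natDegree_sub_le _ _).trans (max_le (jser_natDegree _ _) ?_)
    exact (natDegree_C_mul_le _ _).trans (jP_degree _ _ _)
  have h0 : y = 0 := by
    refine eq_zero_of_dvd_of_natDegree_lt hd ?_
    have : ((1 - X : ℝ[X])^a).natDegree = a := by
      rw [natDegree_pow, show (1 - X : ℝ[X]) = -(X - C 1) by simp, natDegree_neg, natDegree_X_sub_C, mul_one]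
    omega
  exact ⟨_, sub_eq_zero.1 h0⟩

lemma jser_jordan (a b u v : ℕ) (h : u + v + 1 = a + b) (huv : v < u) (hu : u + 1 ≤ a) :
    ∃ c, jT a b (jser (dg a b u) u - jser (dg a b v) v) =
      -C (jl a b u) * (jser (dg a b u) u - jser (dg a b v) v) + C c * jP (-(a:ℝ)) (-(b:ℝ)) v := by
  obtain ⟨c, hc⟩ := jser_prop a b v (by omega)
  refine ⟨((u:ℝ)-v)*c, ?_⟩
  have hg := fun j => gq_symm a b u v j h
  rw [jT_sub, jser_dg a b u hu, jser_dg a b v (by omega), jl_symm a b u v h, C_mul, mul_assoc, ← hc]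
  have e : jser (fun j => ((j:ℝ)+1) * gq a b u (j+1) 0 - ((j:ℝ)-u) * gq a b u j 0) u =
      jser (fun j => ((j:ℝ)+1) * gq a b v (j+1) 0 - ((j:ℝ)-v) * gq a b v j 0) v +
       C ((u:ℝ)-v) * jser (fun j => gq a b v j 0) v := by
    unfold jser
    rw [← Finset.sum_subset (Finset.range_mono (show v + 1 ≤ u + 1 by omega)), Finset.mul_sum, ← Finset.sum_add_distrib]
    · refine Finset.sum_congr rfl fun j _ => ?_
      simp only [hg, C_add, C_sub, C_mul]; ring
    · intro j _ hj
      have hj : v < j := by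
        simp only [Finset.mem_range] at hj; omega
      simp only [hg, gq_zero a b v j hj, gq_zero a b v (j+1) (by omega : v < j+1)]
      simp
  rw [e]; ring

def kap (a b u : ℕ) : ℝ :=
  poch (-(a:ℝ) + 1) (max u (a+b-1-u)) / ((max u.factorial (a+b-1-u).factorial : ℕ) : ℝ)

lemma kap_symm (a b u v : ℕ) (h : u + v + 1 = a + b) : kap a b u = kap a b v := by
  unfold kap
  rw [show a+b-1-u = v by omega, show a+b-1-v = u by omega, max_comm u v, max_comm u.factorial]

lemma phiJ_deriv (a b u : ℕ) (hu : u + 1 ≤ a) (x : ℝ) :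
    deriv (fun s => phiJ (-(a:ℤ)) (-(b:ℤ)) u s x) 0 = (C (kap a b u) * jser (dg a b u) u).eval x := by
  have e : (fun s => phiJ (-(a:ℤ)) (-(b:ℤ)) u s x) = fun s => kap a b u *
      ∑ j ∈ Finset.range (u+1), gq a b u j s * ((1-x)/2)^j := by
    funext s
    unfold phiJ kap gq
    rw [show (- -(a:ℤ) - -(b:ℤ) - u - 1).toNat = a + b - 1 - u by omega]
    push_cast
    rfl
  rw [e]
  have : HasDerivAt (fun s => kap a b u * ∑ j ∈ Finset.range (u+1), gq a b u j s * ((1-x)/2)^j)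
      (kap a b u * ∑ j ∈ Finset.range (u+1), dg a b u j * ((1-x)/2)^j) 0 := by
    refine HasDerivAt.const_mul _ ?_
    refine HasDerivAt.fun_sum fun j hj => ?_
    have hj := Finset.mem_range.1 hj
    exact (gq_diff a b u j (by omega)).hasDerivAt.mul_const _
  rw [this.deriv]
  unfold jser jZ
  simp only [eval_mul, eval_C, eval_finset_sum, eval_pow, eval_sub, eval_one, eval_X]
  congr 1
  refine Finset.sum_congr rfl fun j _ => ?_
  congr 2; ring

/-- leading scalar of the middle branch -/
def jkp (a b n : ℕ) : ℝ := (-1 : ℝ) ^ (-(b:ℤ) + (n:ℤ)) *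
  (((n-a).factorial:ℝ) * ((n-b).factorial : ℝ) * ((a+b-1-n).factorial : ℝ)) / (n.factorial : ℝ)

def pHat (a b : ℕ) (M : ℕ → ℝ) (n : ℕ) : ℝ[X] :=
  if a + b ≤ 2 * n ∧ n + 1 ≤ a then
    C (kap a b n) * jser (dg a b n) n - C (kap a b (a+b-1-n)) * jser (dg a b (a+b-1-n)) (a+b-1-n)
  else if a ≤ n ∧ n + 1 ≤ a + b then
    C (jkp a b n) * (C ((M (n-a) - 1)⁻¹) * jP (-(a:ℝ)) (-(b:ℝ)) (a+b-1-n) + jQ a b (n-a))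
  else jP (-(a:ℝ)) (-(b:ℝ)) n

lemma Phat_eq (a b : ℕ) (M : ℕ → ℝ) (n : ℕ) :
    Phat (-(a:ℤ)) (-(b:ℤ)) M n = fun x => (pHat a b M n).eval x := by
  funext x
  unfold Phat pHat
  have c1 : (⌈((- -(a:ℤ) - -(b:ℤ) : ℤ) : ℚ) / 2⌉ ≤ (n : ℤ) ∧ (n : ℤ) ≤ - -(a:ℤ) - 1) ↔ (a + b ≤ 2 * n ∧ n + 1 ≤ a) := by
    refine and_congr ?_ (by omega)
    rw [Int.ceil_le, div_le_iff₀ (by norm_num)]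
    push_cast
    constructor
    · intro h
      have : ((a + b : ℕ) : ℚ) ≤ ((2 * n : ℕ) : ℚ) := by push_cast; linarith
      exact_mod_cast this
    · intro h
      have : ((a + b : ℕ) : ℚ) ≤ ((2 * n : ℕ) : ℚ) := by exact_mod_cast h
      push_cast at this; linarith
  have c2 : (- -(a:ℤ) ≤ (n : ℤ) ∧ (n : ℤ) ≤ - -(a:ℤ) - -(b:ℤ) - 1) ↔ (a ≤ n ∧ n + 1 ≤ a + b) := by omega
  simp only [c1, c2]
  have t1 : (- -(a:ℤ) - -(b:ℤ) - (n:ℤ) - 1).toNat = a + b - 1 - n := by omega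
  have t2 : ((n:ℤ) + -(a:ℤ)).toNat = n - a := by omega
  have t3 : ((n:ℤ) + -(b:ℤ)).toNat = n - b := by omega
  have t4 : (-(a:ℤ) + (n:ℤ)).toNat = n - a := by omega
  have t5 : (- -(a:ℤ)).toNat = a := by omega
  simp only [t1, t2, t3, t4, t5]
  split_ifs with h1 h2
  · rw [phiJ_deriv a b n h1.2, phiJ_deriv a b (a+b-1-n) (by omega), ← eval_sub]
  · unfold jkp jQ jZ
    simp only [eval_mul, eval_C, eval_add, eval_pow, eval_sub, eval_one, eval_X, jP_eval]
    push_cast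
    rw [neg_neg]
    congr 3
    congr 1; ring
  · rw [jP_eval]; push_cast; rfl

end ejphib

noncomputable section ejasm
open Polynomial

lemma pHat_eig (a b : ℕ) (M : ℕ → ℝ) (f : ℕ) (h : ¬ (a + b ≤ 2 * f ∧ f + 1 ≤ a)) :
    jT a b (pHat a b M f) = -C (jl a b f) * pHat a b M f := by
  unfold pHat
  rw [if_neg h]
  split_ifs with h2
  · rw [jT_C_mul, jT_add, jT_C_mul, jT_jP, jT_jQ a b (f-a) (a+b-1-f) (by omega),
      jl_symm a b f (a+b-1-f) (by omega)]
    ring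
  · exact jT_jP a b f

lemma pHat_jor (a b : ℕ) (M : ℕ → ℝ) (f : ℕ) (h : a + b ≤ 2 * f ∧ f + 1 ≤ a) :
    ∃ c, jT a b (pHat a b M f) = -C (jl a b f) * pHat a b M f + C c * pHat a b M (a+b-1-f) := by
  obtain ⟨c, hc⟩ := jser_jordan a b f (a+b-1-f) (by omega) (by omega) (by omega)
  refine ⟨kap a b f * c, ?_⟩
  have e2 : pHat a b M (a+b-1-f) = jP (-(a:ℝ)) (-(b:ℝ)) (a+b-1-f) := by
    unfold pHat
    rw [if_neg (by omega), if_neg (by omega)]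
  rw [e2]
  unfold pHat
  rw [if_pos h, ← kap_symm a b f (a+b-1-f) (by omega), ← mul_sub, jT_C_mul, hc, C_mul]
  ring

lemma ej_iter (p : ℝ[X]) (j : ℕ) : iteratedDeriv j (fun x => p.eval x) = fun x => (derivative^[j] p).eval x := by
  induction j with
  | zero => simp
  | succ j ih =>
    rw [iteratedDeriv_succ, ih, Function.iterate_succ_apply']
    funext x
    exact Polynomial.deriv _

lemma ej_perm (N : ℕ) (g g' : ℕ → ℝ[X]) (u : ℝ[X]) (σ : Equiv.Perm (Fin N)) (h : ∀ i : Fin N, g i = g' (σ i)) :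
    (wrM N g).det^2 = (wrM N g').det^2 ∧ (wrE N g u).det^2 = (wrE N g' u).det^2 := by
  have hs : ∀ {n : ℕ} (τ : Equiv.Perm (Fin n)), (((Equiv.Perm.sign τ : ℤˣ) : ℤ) : ℝ[X])^2 = 1 := by
    intro n τ
    rcases Int.units_eq_one_or (Equiv.Perm.sign τ) with h | h <;> rw [h] <;> simp
  constructor
  · have : wrM N g = (wrM N g').submatrix σ id := by
      ext i j : 1
      simp [wrM, h]
    rw [this, Matrix.det_permute, mul_pow, hs, one_mul]
  · have : wrE N g u = (wrE N g' u).submatrix (Equiv.Perm.decomposeFin.symm (0, σ)) id := by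
      ext i j : 1
      refine Fin.cases ?_ (fun k => ?_) i
      · simp [wrE]
      · simp [wrE, h]
    rw [this, Matrix.det_permute, mul_pow, hs, one_mul]

def gE (F : Finset ℕ) (i : ℕ) : ℕ := if h : i < F.card then elemOf F ⟨i, h⟩ else 0

lemma gE_mem (F : Finset ℕ) (i : ℕ) (h : i < F.card) : gE F i ∈ F := by
  unfold gE; rw [dif_pos h]; exact (F.orderIsoOfFin rfl ⟨i, h⟩).2

lemma gE_surj (F : Finset ℕ) (f : ℕ) (h : f ∈ F) : ∃ i < F.card, gE F i = f := by
  refine ⟨(F.orderIsoOfFin rfl).symm ⟨f, h⟩, Fin.is_lt _, ?_⟩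
  unfold gE; rw [dif_pos (Fin.is_lt _)]
  simp [elemOf]

lemma gE_mono (F : Finset ℕ) (i j : ℕ) (hi : i < F.card) (hj : j < F.card) (h : gE F j < gE F i) : j < i := by
  unfold gE at h; rw [dif_pos hi, dif_pos hj] at h
  unfold elemOf at h
  have : (F.orderIsoOfFin rfl ⟨j, hj⟩) < (F.orderIsoOfFin rfl ⟨i, hi⟩) := h
  simpa using this

lemma Omega_eq (a b : ℕ) (M : ℕ → ℝ) (F : Finset ℕ) (x : ℝ) :
    OmegaJ (-(a:ℤ)) (-(b:ℤ)) M F x = ((wrM F.card (fun i => pHat a b M (gE F i))).det).eval x := by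
  unfold OmegaJ
  rw [← coe_evalRingHom, RingHom.map_det]
  congr 1
  ext i j
  simp only [Matrix.of_apply, RingHom.mapMatrix_apply, Matrix.map_apply, wrM, coe_evalRingHom]
  rw [Phat_eq, ej_iter]
  simp [gE]

lemma exJ_eq (a b : ℕ) (M : ℕ → ℝ) (F : Finset ℕ) (n : ℕ) (x : ℝ) :
    exJacobi (-(a:ℤ)) (-(b:ℤ)) M F (n + uF F) x =
      ((wrE F.card (fun i => pHat a b M (gE F i)) (pHat a b M n)).det).eval x := by
  unfold exJacobi
  rw [← coe_evalRingHom, RingHom.map_det]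
  congr 1
  ext i j
  simp only [Matrix.of_apply, RingHom.mapMatrix_apply, Matrix.map_apply, wrE, coe_evalRingHom]
  refine Fin.cases ?_ (fun k => ?_) i
  · simp only [Fin.cases_zero]
    rw [Phat_eq, ej_iter, Nat.add_sub_cancel]
  · simp only [Fin.cases_succ]
    rw [Phat_eq, ej_iter]
    simp [gE]

lemma ej_sigma (F : Finset ℕ) (g : ℕ → ℕ) (h1 : ∀ i < F.card, g i ∈ F) (h2 : ∀ f ∈ F, ∃ i < F.card, g i = f) :
    (∃ σ : Equiv.Perm (Fin F.card), ∀ i : Fin F.card, g i = gE F (σ i)) ∧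
    Set.InjOn g (Finset.range F.card) ∧ Finset.image g (Finset.range F.card) = F := by
  have him : Finset.image g (Finset.range F.card) = F := by
    ext f
    simp only [Finset.mem_image, Finset.mem_range]
    exact ⟨fun ⟨i, hi, e⟩ => e ▸ h1 i hi, fun h => h2 f h⟩
  have hinj : Set.InjOn g (Finset.range F.card) :=
    Finset.injOn_of_card_image_eq (by rw [him, Finset.card_range])
  refine ⟨?_, hinj, him⟩
  choose! s hs hs' using gE_surj F
  let t : Fin F.card → Fin F.card := fun i => ⟨s (g i), hs _ (h1 i i.2)⟩
  have ht : Function.Injective t := by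
    intro i j hij
    have : s (g i) = s (g j) := congrArg Fin.val hij
    have e := congrArg (gE F) this
    rw [hs' _ (h1 i i.2), hs' _ (h1 j j.2)] at e
    exact Fin.ext (hinj (by simp) (by simp) e)
  refine ⟨Equiv.ofBijective t (Finite.injective_iff_bijective.1 ht), fun i => ?_⟩
  simp [t, hs' _ (h1 i i.2)]

lemma ej_red (a b : ℕ) (M : ℕ → ℝ) (F : Finset ℕ) (haN : a ≤ F.card) (hbN : b ≤ F.card) (n : ℕ)
    (g : ℕ → ℕ) (h1 : ∀ i < F.card, g i ∈ F) (h2 : ∀ f ∈ F, ∃ i < F.card, g i = f) (x : ℝ) :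
    (exJacobi (-(a:ℤ)) (-(b:ℤ)) M F (n + uF F) x)^2 * wJ (-(a:ℤ)) (-(b:ℤ)) M F x =
    (1-x)^(F.card-a)*(1+x)^(F.card-b)*((wrE F.card (fun i => pHat a b M (g i)) (pHat a b M n)).det).eval x *
      ((wrE F.card (fun i => pHat a b M (g i)) (pHat a b M n)).det).eval x /
        (((wrM F.card (fun i => pHat a b M (g i))).det).eval x)^2 := by
  obtain ⟨⟨σ, hσ⟩, -, -⟩ := ej_sigma F g h1 h2
  obtain ⟨e1, e2⟩ := ej_perm F.card (fun i => pHat a b M (g i)) (fun i => pHat a b M (gE F i)) (pHat a b M n) σ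
    (fun i => by simp only [hσ])
  have e1' := congrArg (eval x) e1
  have e2' := congrArg (eval x) e2
  rw [eval_pow, eval_pow] at e1' e2'
  unfold wJ
  rw [Omega_eq, exJ_eq, e1', ← e2',
    show (-(a:ℤ) + (F.card:ℤ)) = ((F.card - a : ℕ) : ℤ) by omega,
    show (-(b:ℤ) + (F.card:ℤ)) = ((F.card - b : ℕ) : ℤ) by omega, zpow_natCast, zpow_natCast]
  ring

lemma ej_int (a b : ℕ) (ha : 1 ≤ a) (hb : 1 ≤ b) (M : ℕ → ℝ) (F : Finset ℕ) (haN : a ≤ F.card) (hbN : b ≤ F.card)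
    (hFc : ∀ k, b ≤ k → k < a + b → k ∈ F)
    (hΩ : ∀ x ∈ Set.Icc (-1 : ℝ) 1, OmegaJ (-(a:ℤ)) (-(b:ℤ)) M F x ≠ 0)
    (g : ℕ → ℕ) (h1 : ∀ i < F.card, g i ∈ F) (h2 : ∀ f ∈ F, ∃ i < F.card, g i = f)
    (h3 : ∀ i j, i < F.card → j < F.card → g i < a → g j < g i → j < i) (u : ℝ[X]) (l : ℝ) (hu : jT a b u = -C l * u) :
    ∃ B₁ B₂ : ℝ[X] →ₗ[ℝ] ℝ, (∀ v h, C (∏ f ∈ F, (l - jl a b f)) * u * v = (1-X)^a*(1+X)^b*h →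
       ∫ x in (-1:ℝ)..1, (1-x)^(F.card-a)*(1+x)^(F.card-b)*((wrE F.card (fun i => pHat a b M (g i)) u).det).eval x *
      ((wrE F.card (fun i => pHat a b M (g i)) v).det).eval x /
        (((wrM F.card (fun i => pHat a b M (g i))).det).eval x)^2 = (∫ x in (-1:ℝ)..1, h.eval x) + B₁ v - B₂ v) ∧
      (∀ v, (1-X)^a ∣ v → B₁ v = 0) ∧ (∀ v, (1+X)^b ∣ v → B₂ v = 0) ∧
      (∀ W, pHat a b M (g 0) * derivative u - derivative (pHat a b M (g 0)) * u = (1-X)^(a-1)*(1+X)^(b-1)*W →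
        B₁ (pHat a b M (g 0)) = (∏ f ∈ F.erase (g 0), (l - jl a b f)) * W.eval 1 ∧
        B₂ (pHat a b M (g 0)) = (∏ f ∈ F.erase (g 0), (l - jl a b f)) * W.eval (-1)) := by
  obtain ⟨⟨σ, hσ⟩, hinj, him⟩ := ej_sigma F g h1 h2
  have hN : 0 < F.card := by omega
  have := ej_integral a b F.card ha hb haN hbN (fun i => pHat a b M (g i)) (fun i => jl a b (g i)) ?_ ?_ u l hu
  · have p1 : ∏ i ∈ Finset.range F.card, (l - jl a b (g i)) = ∏ f ∈ F, (l - jl a b f) := by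
      conv_rhs => rw [← him]
      rw [Finset.prod_image hinj]
    have p2 : ∏ i ∈ Finset.Ico 1 F.card, (l - jl a b (g i)) = ∏ f ∈ F.erase (g 0), (l - jl a b f) := by
      have : F.erase (g 0) = Finset.image g (Finset.Ico 1 F.card) := by
        ext f
        simp only [Finset.mem_erase, Finset.mem_image, Finset.mem_Ico]
        constructor
        · rintro ⟨hf, hF⟩
          obtain ⟨i, hi, rfl⟩ := h2 f hF
          refine ⟨i, ⟨?_, hi⟩, rfl⟩
          rcases i with _ | i
          · exact absurd rfl hf
          · omega
        · rintro ⟨i, ⟨hi, hi'⟩, rfl⟩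
          refine ⟨fun e => ?_, h1 i hi'⟩
          have := hinj (by simpa using hi') (by simpa using hN) e
          omega
      rw [this, Finset.prod_image]
      intro i hi j hj e
      simp only [Finset.coe_Ico, Set.mem_Ico] at hi hj
      exact hinj (by simpa using hi.2) (by simpa using hj.2) e
    simp only [p1, p2] at this
    exact this
  · intro x hx h0
    have e1 := (ej_perm F.card (fun i => pHat a b M (g i)) (fun i => pHat a b M (gE F i)) 0 σ
      (fun i => by simp only [hσ])).1
    have e1' := congrArg (eval x) e1
    rw [eval_pow, eval_pow, h0, ← Omega_eq] at e1'
    exact hΩ x hx (by simpa using e1'.symm)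
  · intro i hi
    by_cases hb1 : a + b ≤ 2 * g i ∧ g i + 1 ≤ a
    · right
      obtain ⟨c, hc⟩ := pHat_jor a b M (g i) hb1
      obtain ⟨j, hj, hj'⟩ := h2 (a+b-1-g i) (hFc _ (by omega) (by omega))
      refine ⟨j, h3 i j hi hj (by omega) (by omega), c, ?_⟩
      simp only [hj', hc]
    · left
      exact pHat_eig a b M (g i) hb1

end ejasm

noncomputable section ejfin
open Polynomial

lemma jl_sub (a b n f : ℕ) : jl a b n - jl a b f = ((n:ℝ) - f) * ((n:ℝ) + f - a - b + 1) := by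
  unfold jl; ring

lemma UF_prod (a b : ℕ) (F : Finset ℕ) (hF : ∀ f ∈ F, 0 < f) (n : ℕ) :
    ∏ u ∈ UF (-(a:ℤ)) (-(b:ℤ)) F, ((n : ℝ) + ((u : ℤ) : ℝ) + 1) =
      ∏ f ∈ F \ Finset.Ico b (a+b), ((n:ℝ) + f - a - b + 1) := by
  have : UF (-(a:ℤ)) (-(b:ℤ)) F = (F \ Finset.Ico b (a+b)).image (fun f : ℕ => (f : ℤ) + -(a:ℤ) + -(b:ℤ)) := by
    unfold UF UFm UFp
    rw [← Finset.image_union]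
    congr 1
    ext f
    simp only [Finset.mem_union, Finset.mem_filter, Finset.mem_sdiff, Finset.mem_Ico]
    constructor
    · rintro (⟨h, h'⟩ | ⟨h, h'⟩)
      · exact ⟨h, by omega⟩
      · exact ⟨h, by omega⟩
    · rintro ⟨h, h'⟩
      have := hF f h
      by_cases hb : f < b
      · exact Or.inl ⟨h, by omega⟩
      · exact Or.inr ⟨h, by omega⟩
  rw [this, Finset.prod_image]
  · refine Finset.prod_congr rfl fun f _ => ?_
    push_cast; ring
  · intro x _ y _ h
    simpa using h

lemma prod_fact (m a : ℕ) : (∏ i ∈ Finset.range a, ((m:ℝ) + i + 1)) * (m.factorial : ℝ) = ((m+a).factorial : ℝ) := by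
  induction a with
  | zero => simp
  | succ a ih =>
    rw [Finset.prod_range_succ, ← add_assoc, Nat.factorial_succ, mul_right_comm, ih]
    push_cast; ring

lemma F_split (a b : ℕ) (F : Finset ℕ) (hFc : ∀ k, b ≤ k → k < a + b → k ∈ F) (φ : ℕ → ℝ) :
    ∏ f ∈ F, φ f = (∏ f ∈ F \ Finset.Ico b (a+b), φ f) * ∏ f ∈ Finset.Ico b (a+b), φ f := by
  refine (Finset.prod_sdiff ?_).symm
  intro k hk
  rw [Finset.mem_Ico] at hk
  exact hFc k hk.1 hk.2

lemma zpow_ab (a b : ℕ) : (2:ℝ) ^ (-(a:ℤ) + -(b:ℤ) + 1) = 2 / 2^(a+b) := by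
  rw [show -(a:ℤ) + -(b:ℤ) + 1 = 1 - ((a + b : ℕ) : ℤ) by push_cast; ring, zpow_sub₀ two_ne_zero, zpow_natCast, zpow_one]

lemma ej_case1 (a b : ℕ) (hb : 1 ≤ b) (hab : b ≤ a) (M : ℕ → ℝ) (F : Finset ℕ)
    (hF : ∀ f ∈ F, 0 < f) (haN : a ≤ F.card)
    (hFc : ∀ k, b ≤ k → k < a + b → k ∈ F)
    (hΩ : ∀ x ∈ Set.Icc (-1 : ℝ) 1, OmegaJ (-(a:ℤ)) (-(b:ℤ)) M F x ≠ 0) (n : ℕ) (hn : a + b ≤ n) :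
    ∫ x in (-1 : ℝ)..1, (exJacobi (-(a:ℤ)) (-(b:ℤ)) M F (n + uF F) x) ^ 2 * wJ (-(a:ℤ)) (-(b:ℤ)) M F x =
      2 / 2^(a+b) * (∏ f ∈ F, ((n : ℝ) - (f : ℝ))) *
          (∏ u ∈ UF (-(a:ℤ)) (-(b:ℤ)) F, ((n : ℝ) + ((u : ℤ) : ℝ) + 1)) *
          (∏ i ∈ Finset.range a, ((n : ℝ) - a - b + (i : ℝ) + 1)) /
        (2 * (n : ℝ) - a - b + 1) := by
  have hp : pHat a b M n = jP (-(a:ℝ)) (-(b:ℝ)) n := by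
    unfold pHat
    rw [if_neg (by omega), if_neg (by omega)]
  have hr := ej_red a b M F haN (by omega) n (gE F) (gE_mem F) (gE_surj F)
  obtain ⟨B₁, B₂, hI, hB1, hB2, -⟩ := ej_int a b (by omega) hb M F haN (by omega) hFc hΩ (gE F) (gE_mem F) (gE_surj F)
    (fun i j hi hj _ h => gE_mono F i j hi hj h) (pHat a b M n) (jl a b n) (by rw [hp]; exact jT_jP a b n)
  simp only [hr]
  obtain ⟨h0, hh, hh'⟩ := jP_neg_norm a b n hn
  obtain ⟨q, hq⟩ := jP_neg_dvd a b n hn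
  rw [hI (pHat a b M n) (C (∏ f ∈ F, (jl a b n - jl a b f)) * h0) (by
    rw [hp, mul_assoc, hh]; ring)]
  rw [hB1 _ (by rw [hp, hq]; exact ⟨(1+X)^b*q, by ring⟩), hB2 _ (by rw [hp, hq]; exact ⟨(1-X)^a*q, by ring⟩)]
  simp only [eval_mul, eval_C, intervalIntegral.integral_const_mul, hh', UF_prod a b F hF, jl_sub, Finset.prod_mul_distrib]
  rw [F_split a b F hFc (fun f => ((n:ℝ) + f - a - b + 1))]
  have p1 := prod_fact (n-a) a
  have p2 := prod_fact (n-a-b) a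
  rw [show n - a + a = n by omega] at p1
  rw [show n - a - b + a = n - b by omega] at p2
  have e1 : ∏ f ∈ Finset.Ico b (a+b), ((n:ℝ) + f - a - b + 1) = ∏ i ∈ Finset.range a, (((n-a:ℕ):ℝ) + i + 1) := by
    rw [Finset.prod_Ico_eq_prod_range, show a + b - b = a by omega]
    refine Finset.prod_congr rfl fun i _ => ?_
    rw [Nat.cast_sub (by omega)]; push_cast; ring
  have e2 : ∏ i ∈ Finset.range a, ((n : ℝ) - a - b + (i : ℝ) + 1) = ∏ i ∈ Finset.range a, (((n-a-b:ℕ):ℝ) + i + 1) := by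
    refine Finset.prod_congr rfl fun i _ => ?_
    rw [Nat.cast_sub (by omega), Nat.cast_sub (by omega)]
  rw [e1, e2, ← p1, ← p2]
  have q1 : (((n-a).factorial : ℕ) : ℝ) ≠ 0 := by positivity
  have q2 : (((n-a-b).factorial : ℕ) : ℝ) ≠ 0 := by positivity
  have q3 : (∏ i ∈ Finset.range a, (((n-a:ℕ):ℝ) + i + 1)) ≠ 0 := by positivity
  generalize (∏ i ∈ Finset.range a, (((n-a:ℕ):ℝ) + i + 1)) = A at *
  generalize (∏ i ∈ Finset.range a, (((n-a-b:ℕ):ℝ) + i + 1)) = B at *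
  generalize (2 * (n:ℝ) - a - b + 1) = D
  simp only [div_eq_mul_inv]
  field_simp
  ring

lemma gb_neg (m n : ℕ) : genBinom (-((m:ℝ)+1)) n = (-1)^n * ((m+n).choose n : ℝ) := by
  induction n with
  | zero => simp [genBinom]
  | succ n ih =>
    have h := genBinom_succ (-((m:ℝ)+1)) n
    have hn : (n:ℝ) + 1 ≠ 0 := by positivity
    have h2 : ((m + (n+1)).choose (n+1) : ℝ) * ((n:ℝ)+1) = ((m+n).choose n : ℝ) * ((m:ℝ) + n + 1) := by
      have := Nat.add_one_mul_choose_eq (m+n) n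
      have h3 : (((m+n+1 : ℕ) * (m+n).choose n : ℕ) : ℝ) = (((m+n+1).choose (n+1) * (n+1) : ℕ) : ℝ) := by rw [this]
      push_cast at h3
      rw [← add_assoc, ← h3]; ring
    apply mul_right_cancel₀ hn
    rw [h, ih, pow_succ, mul_assoc, mul_assoc, mul_assoc, h2]
    ring

end ejfin

noncomputable section ejfin2
open Polynomial

lemma PQ_wron (a b n m t : ℕ) (hm : n + m + 1 = b) (ht : n + t + 1 = a) :
    (1+X)^b ∣ jP (-(a:ℝ)) (-(b:ℝ)) n - jQ a b m ∧
    ∃ w : ℝ[X], jQ a b m * derivative (jP (-(a:ℝ)) (-(b:ℝ)) n) - derivative (jQ a b m) * jP (-(a:ℝ)) (-(b:ℝ)) n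
      = (1-X)^(a-1) * (1+X)^(b-1) * w ∧
      w.eval 1 = 2 / 2^(a+b) * (a * ((m+a).choose m : ℝ) * ((-1)^n * ((t+n).choose n : ℝ))) := by
  have hb' : (b:ℝ) = n + m + 1 := by exact_mod_cast hm.symm
  have ha' : (a:ℝ) = n + t + 1 := by exact_mod_cast ht.symm
  have hP1 : (jP (-(a:ℝ)) (-(b:ℝ)) n).eval 1 = (-1)^n * ((t+n).choose n : ℝ) := by
    rw [jP_one, ← gb_neg, ha']; congr 1; ring
  have hPm : (jP (-(a:ℝ)) (-(b:ℝ)) n).eval (-1) = ((m+n).choose n : ℝ) := by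
    rw [jP_neg_one, show (n:ℝ) + -(b:ℝ) = -((m:ℝ)+1) by rw [hb']; ring, gb_neg, ← mul_assoc, ← mul_pow]; simp
  have hR1 : (jP (a:ℝ) (-(b:ℝ)) m).eval 1 = ((m+a).choose m : ℝ) := by
    rw [jP_one, ← genBinom_nat]; push_cast; rfl
  have hRm : (jP (a:ℝ) (-(b:ℝ)) m).eval (-1) = ((m+n).choose n : ℝ) := by
    rw [jP_neg_one, show (m:ℝ) + -(b:ℝ) = -((n:ℝ)+1) by rw [hb']; ring, gb_neg, ← mul_assoc, ← mul_pow]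
    rw [add_comm n m, Nat.choose_symm_add]; simp
  have hQm : (jQ a b m).eval (-1) = ((m+n).choose n : ℝ) := by
    unfold jQ jZ
    simp only [eval_mul, eval_pow, eval_C, eval_sub, eval_one, eval_X, hRm]
    norm_num
  have hQd := jQ_eq a b m
  have hdiv : (1+X)^b ∣ jP (-(a:ℝ)) (-(b:ℝ)) n - jQ a b m := by
    refine ej_exp_neg a b (jl a b n) _ ?_ ?_
    · rw [jT_sub, jT_jP, jT_jQ a b m n hm]; ring
    · rw [eval_sub, hPm, hQm, sub_self]
  refine ⟨hdiv, ?_⟩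
  obtain ⟨a', rfl⟩ : ∃ a', a = a' + 1 := ⟨n + t, by omega⟩
  obtain ⟨b', rfl⟩ : ∃ b', b = b' + 1 := ⟨n + m, by omega⟩
  set P := jP (-((a'+1:ℕ):ℝ)) (-((b'+1:ℕ):ℝ)) n with hP
  set R := jP ((a'+1:ℕ):ℝ) (-((b'+1:ℕ):ℝ)) m with hR
  set Q := jQ (a'+1) (b'+1) m with hQ
  obtain ⟨E, hE⟩ := hdiv
  have d1 : Q * derivative P - derivative Q * P = (1-X)^a' *
      (C ((1/2)^(a'+1)) * ((1-X) * R * derivative P + C ((a':ℝ)+1) * R * P - (1-X) * derivative R * P)) := by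
    rw [hQd]
    simp [derivative_mul, derivative_pow]; ring
  have d2 : (1+X)^b' ∣ Q * derivative P - derivative Q * P := by
    refine ⟨Q * (C ((b':ℝ)+1) * E + (1+X) * derivative E) - derivative Q * ((1+X) * E), ?_⟩
    have : P = Q + (1+X)^(b'+1) * E := by rw [← hE]; ring
    rw [this]
    simp [derivative_mul, derivative_pow]; ring
  have hcop : IsCoprime ((1-X : ℝ[X])^a') ((1+X)^b') := by
    refine IsCoprime.pow ⟨C (1/2), C (1/2), ?_⟩
    have : (2:ℝ[X]) * C (1/2) = 1 := by rw [← ejC2, ← C_mul]; norm_num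
    linear_combination this
  obtain ⟨w, hw⟩ := hcop.mul_dvd ⟨_, d1⟩ d2
  refine ⟨w, by simpa using hw, ?_⟩
  have hX : (1 - X : ℝ[X])^a' ≠ 0 := by
    refine pow_ne_zero _ fun h => ?_
    have := congrArg (eval 0) h
    simp at this
  have e : (1+X)^b' * w = (C ((1/2)^(a'+1)) * ((1-X) * R * derivative P + C ((a':ℝ)+1) * R * P - (1-X) * derivative R * P)) := by
    apply mul_left_cancel₀ hX
    rw [← d1, hw]; ring
  have e1 := congrArg (eval 1) e
  simp only [eval_mul, eval_pow, eval_add, eval_sub, eval_one, eval_X, eval_C, hR1, hP1, sub_self, zero_mul, zero_add, sub_zero] at e1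
  have h2 : ((1:ℝ) + 1)^b' ≠ 0 := by positivity
  apply mul_left_cancel₀ h2
  rw [e1]
  push_cast
  rw [show a' + 1 + (b' + 1) = b' + (a' + 1) + 1 by ring, pow_succ, pow_add]
  rw [show (1:ℝ) + 1 = 2 by norm_num, one_div, inv_pow]
  field_simp
  ring

lemma mid_prod (a b n m t : ℕ) (hm : n + m + 1 = b) (ht : n + t + 1 = a) :
    (∏ f ∈ (Finset.Ico b (a+b)).erase (b+t), ((n:ℝ) + f - a - b + 1)) *
      (a * ((m+a).choose m : ℝ) * ((-1)^n * ((t+n).choose n : ℝ))) =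
     - ∏ i ∈ Finset.range a, ((n : ℝ) - a - b + (i : ℝ) + 1) := by
  have hb' : (b:ℝ) = n + m + 1 := by exact_mod_cast hm.symm
  have ha' : (a:ℝ) = n + t + 1 := by exact_mod_cast ht.symm
  have hs : (Finset.Ico b (a+b)).erase (b+t) = Finset.Ico b (b+t) ∪ Finset.Ico (b+t+1) (a+b) := by
    ext f; simp only [Finset.mem_erase, Finset.mem_union, Finset.mem_Ico]; omega
  have hdis : Disjoint (Finset.Ico b (b+t)) (Finset.Ico (b+t+1) (a+b)) := by
    rw [Finset.disjoint_left]; intro f; simp only [Finset.mem_Ico]; omega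
  have hrev : ∀ k l : ℕ, (∏ i ∈ Finset.range k, (-((l:ℝ) + (k - i : ℕ)))) * (l.factorial : ℝ) = (-1)^k * ((l+k).factorial : ℝ) := by
    intro k l
    rw [← Finset.prod_range_reflect, ← prod_fact l k, ← mul_assoc]
    congr 1
    rw [show (-1:ℝ)^k = ∏ i ∈ Finset.range k, (-1:ℝ) by simp, ← Finset.prod_mul_distrib]
    refine Finset.prod_congr rfl fun i hi => ?_
    have := Finset.mem_range.1 hi
    rw [show k - (k - 1 - i) = i + 1 by omega]; push_cast; ring
  have p1 : ∏ f ∈ Finset.Ico b (b+t), ((n:ℝ) + f - a - b + 1) = (-1)^t * (t.factorial : ℝ) := by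
    have := hrev t 0
    simp only [Nat.factorial_zero, Nat.cast_one, mul_one, zero_add] at this
    rw [← this, Finset.prod_Ico_eq_prod_range, show b + t - b = t by omega]
    refine Finset.prod_congr rfl fun i hi => ?_
    have := Finset.mem_range.1 hi
    rw [Nat.cast_sub (by omega), ha']; push_cast; ring
  have p2 : ∏ f ∈ Finset.Ico (b+t+1) (a+b), ((n:ℝ) + f - a - b + 1) = (n.factorial : ℝ) := by
    have := prod_fact 0 n
    simp only [Nat.factorial_zero, Nat.cast_one, mul_one, zero_add] at this
    rw [← this, Finset.prod_Ico_eq_prod_range, show a + b - (b + t + 1) = n by omega]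
    refine Finset.prod_congr rfl fun i hi => ?_
    rw [ha']; push_cast; ring
  have p3 : (∏ i ∈ Finset.range a, ((n : ℝ) - a - b + (i : ℝ) + 1)) * (m.factorial : ℝ) = (-1)^a * ((m+a).factorial : ℝ) := by
    rw [← hrev a m]
    congr 1
    refine Finset.prod_congr rfl fun i hi => ?_
    have := Finset.mem_range.1 hi
    rw [Nat.cast_sub (by omega), hb']; ring
  rw [hs, Finset.prod_union hdis, p1, p2]
  have qm : (m.factorial : ℝ) ≠ 0 := by positivity
  apply mul_right_cancel₀ qm
  rw [neg_mul, p3]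
  have c1 : ((m+a).choose m : ℝ) * (m.factorial : ℝ) * (a.factorial : ℝ) = ((m+a).factorial : ℝ) := by
    have := Nat.add_choose_mul_factorial_mul_factorial m a
    rw [Nat.choose_symm_add]
    exact_mod_cast this
  have c2 : ((t+n).choose n : ℝ) * (t.factorial : ℝ) * (n.factorial : ℝ) = ((t+n).factorial : ℝ) := by
    have := Nat.add_choose_mul_factorial_mul_factorial t n
    exact_mod_cast this
  have c3 : (a.factorial : ℝ) = a * ((t+n).factorial : ℝ) := by
    rw [show a = (t + n) + 1 by omega, Nat.factorial_succ]; push_cast; ring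
  rw [← c1, c3, ← c2, show (-1:ℝ)^a = -((-1)^n * (-1)^t) by rw [← ht, pow_succ, pow_add]; ring]
  ring

lemma jkp_ne (a b n : ℕ) : jkp a b n ≠ 0 := by
  unfold jkp
  have : ((-1:ℝ)) ^ (-(b:ℤ) + (n:ℤ)) ≠ 0 := zpow_ne_zero _ (by norm_num)
  positivity

lemma ej_case2 (a b : ℕ) (hb : 1 ≤ b) (hab : b ≤ a) (M : ℕ → ℝ) (hM : ∀ i, M i ≠ 0 ∧ M i ≠ 1) (F : Finset ℕ)
    (hF : ∀ f ∈ F, 0 < f) (haN : a ≤ F.card)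
    (hFc : ∀ k, b ≤ k → k < a + b → k ∈ F)
    (hΩ : ∀ x ∈ Set.Icc (-1 : ℝ) 1, OmegaJ (-(a:ℤ)) (-(b:ℤ)) M F x ≠ 0) (n : ℕ) (hn : n < b) :
    ∫ x in (-1 : ℝ)..1, (exJacobi (-(a:ℤ)) (-(b:ℤ)) M F (n + uF F) x) ^ 2 * wJ (-(a:ℤ)) (-(b:ℤ)) M F x =
      2 / 2^(a+b) * (-(1 - M (b-1-n))^2 / M (b-1-n)) * (∏ f ∈ F, ((n : ℝ) - (f : ℝ))) *
          (∏ u ∈ UF (-(a:ℤ)) (-(b:ℤ)) F, ((n : ℝ) + ((u : ℤ) : ℝ) + 1)) *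
          (∏ i ∈ Finset.range a, ((n : ℝ) - a - b + (i : ℝ) + 1)) /
        (2 * (n : ℝ) - a - b + 1) := by
  obtain ⟨m, hm⟩ : ∃ m, n + m + 1 = b := ⟨b - 1 - n, by omega⟩
  obtain ⟨t, ht⟩ : ∃ t, n + t + 1 = a := ⟨a - 1 - n, by omega⟩
  rw [show b - 1 - n = m by omega]
  have hp : pHat a b M n = jP (-(a:ℝ)) (-(b:ℝ)) n := by
    unfold pHat
    rw [if_neg (by omega), if_neg (by omega)]
  set k := b + t with hk
  have hkF : k ∈ F := hFc k (by omega) (by omega)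
  have hpk : pHat a b M k = C (jkp a b k) * (C ((M m - 1)⁻¹) * jP (-(a:ℝ)) (-(b:ℝ)) n + jQ a b m) := by
    unfold pHat
    rw [if_neg (by omega), if_pos (by omega), show k - a = m by omega, show a + b - 1 - k = n by omega]
  set g : ℕ → ℕ := fun i => Nat.casesOn i k (fun j => gE (F.erase k) j) with hg
  have hcard : (F.erase k).card + 1 = F.card := Finset.card_erase_add_one hkF
  have h1 : ∀ i < F.card, g i ∈ F := by
    intro i hi
    rcases i with _ | i
    · exact hkF
    · exact Finset.mem_of_mem_erase (gE_mem (F.erase k) i (by omega))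
  have h2 : ∀ f ∈ F, ∃ i < F.card, g i = f := by
    intro f hf
    by_cases hfk : f = k
    · exact ⟨0, by omega, hfk.symm⟩
    · obtain ⟨i, hi, e⟩ := gE_surj (F.erase k) f (Finset.mem_erase.2 ⟨hfk, hf⟩)
      exact ⟨i+1, by omega, e⟩
  have h3 : ∀ i j, i < F.card → j < F.card → g i < a → g j < g i → j < i := by
    intro i j hi hj hia hij
    have hka : a ≤ k := by omega
    rcases i with _ | i
    · exact absurd hia (show ¬ k < a by omega)
    · rcases j with _ | j
      · omega
      · have := gE_mono (F.erase k) i j (by omega) (by omega) hij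
        omega
  have hr := ej_red a b M F haN (by omega) n g h1 h2
  obtain ⟨B₁, B₂, hI, hB1, hB2, hB⟩ := ej_int a b (by omega) hb M F haN (by omega) hFc hΩ g h1 h2 h3
    (pHat a b M n) (jl a b n) (by rw [hp]; exact jT_jP a b n)
  simp only [hr]
  have hz : ∏ f ∈ F, (jl a b n - jl a b f) = 0 :=
    Finset.prod_eq_zero hkF (by rw [jl_symm a b n k (by omega), sub_self])
  rw [hI (pHat a b M n) 0 (by rw [hz]; simp)]
  have hI2 := hI (pHat a b M (g 0)) 0 (by rw [hz]; simp)
  have hdet : (wrE F.card (fun i => pHat a b M (g i)) (pHat a b M (g 0))).det = 0 := by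
    refine Matrix.det_zero_of_row_eq (i := 0) (j := Fin.succ ⟨0, by omega⟩) (Fin.succ_ne_zero _).symm ?_
    funext j
    simp [wrE]
  rw [hdet] at hI2
  simp only [eval_zero, mul_zero, zero_div, intervalIntegral.integral_zero, zero_add] at hI2 ⊢
  have hg0 : g 0 = k := rfl
  rw [hg0] at hB hI2
  obtain ⟨hdv, w, hw, hw1⟩ := PQ_wron a b n m t hm ht
  set P := jP (-(a:ℝ)) (-(b:ℝ)) n with hP
  set Q := jQ a b m with hQ
  set c := (M m - 1)⁻¹ with hc
  set κ := jkp a b k with hκ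
  have hκ0 : κ ≠ 0 := jkp_ne a b k
  obtain ⟨w1, w2⟩ := hB (C κ * w) (by
    rw [hpk, hp]
    simp only [derivative_mul, derivative_add, derivative_C, zero_mul, zero_add]
    linear_combination C κ * hw)
  have hsm : ∀ (B : ℝ[X] →ₗ[ℝ] ℝ) (r : ℝ) (p : ℝ[X]), B (C r * p) = r * B p := by
    intro B r p
    rw [← smul_eq_C_mul, map_smul, smul_eq_mul]
  have bq1 : B₁ Q = 0 := hB1 _ (by rw [hQ, jQ_eq]; exact ⟨C ((1/2)^a) * jP (a:ℝ) (-(b:ℝ)) m, by ring⟩)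
  have bq2 : B₂ P = B₂ Q := by
    have := hB2 _ hdv
    rw [map_sub] at this; linarith
  rw [hpk] at w1 w2 hI2
  rw [hsm, map_add, hsm] at w1 w2 hI2
  rw [hsm, map_add, hsm] at hI2
  rw [bq1] at w1 hI2
  rw [← bq2] at w2 hI2
  rw [eval_mul, eval_C] at w1
  rw [hp]
  obtain ⟨hM0, hM1⟩ := hM m
  have hM1' : M m - 1 ≠ 0 := sub_ne_zero.2 hM1
  have x1 : c * B₁ P = (∏ f ∈ F.erase k, (jl a b n - jl a b f)) * w.eval 1 := by
    apply mul_left_cancel₀ hκ0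
    linear_combination w1
  have x2 : (c + 1) * B₂ P = c * B₁ P := by
    apply mul_left_cancel₀ hκ0
    linear_combination hI2
  have hc0 : c * (M m - 1) = 1 := inv_mul_cancel₀ hM1'
  have y1 : B₁ P = (M m - 1) * (c * B₁ P) := by linear_combination (-B₁ P) * hc0
  have y2 : M m * B₂ P = (M m - 1) * (c * B₁ P) := by
    linear_combination (M m - 1) * x2 - B₂ P * hc0
  have y3 : M m * (B₁ P - B₂ P) = (M m - 1)^2 * (c * B₁ P) := by
    linear_combination M m * y1 - y2
  have y4 : B₁ P - B₂ P = (M m - 1)^2 / M m * ((∏ f ∈ F.erase k, (jl a b n - jl a b f)) * w.eval 1) := by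
    rw [← x1]
    field_simp
    linear_combination y3
  rw [y4, hw1, UF_prod a b F hF, ← Finset.mul_prod_erase F _ hkF]
  simp only [jl_sub, Finset.prod_mul_distrib]
  have hsp : ∏ f ∈ F.erase k, ((n:ℝ) + f - a - b + 1) = (∏ f ∈ F \ Finset.Ico b (a+b), ((n:ℝ) + f - a - b + 1)) *
      ∏ f ∈ (Finset.Ico b (a+b)).erase k, ((n:ℝ) + f - a - b + 1) := by
    rw [← Finset.prod_union]
    · refine Finset.prod_congr ?_ fun _ _ => rfl
      ext f
      simp only [Finset.mem_erase, Finset.mem_union, Finset.mem_sdiff, Finset.mem_Ico]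
      constructor
      · rintro ⟨h, h'⟩
        by_cases hf : b ≤ f ∧ f < a + b
        · exact Or.inr ⟨h, hf⟩
        · exact Or.inl ⟨h', hf⟩
      · rintro (⟨h, h'⟩ | ⟨h, h'⟩)
        · refine ⟨?_, h⟩
          rintro rfl
          omega
        · exact ⟨h, hFc f h'.1 h'.2⟩
    · rw [Finset.disjoint_left]
      intro f; simp only [Finset.mem_erase, Finset.mem_sdiff, Finset.mem_Ico]; omega
  have hmid := mid_prod a b n m t hm ht
  rw [hsp]
  have hkc : (n:ℝ) - (k:ℝ) = 2 * n - a - b + 1 := by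
    have : (k:ℝ) + n + 1 = a + b := by exact_mod_cast (by omega : k + n + 1 = a + b)
    linarith
  have hD : (2 * (n:ℝ) - a - b + 1) ≠ 0 := by
    rw [← hkc]
    have : (n:ℝ) < k := by exact_mod_cast (by omega : n < k)
    linarith
  rw [hkc, eq_div_iff hD]
  rw [← hk] at hmid
  generalize (2 * (n:ℝ) - a - b + 1) = D at *
  linear_combination ((M m - 1)^2 / M m * (2 / 2^(a+b)) * D * (∏ f ∈ F.erase k, ((n:ℝ) - f)) * (∏ f ∈ F \ Finset.Ico b (a+b), ((n:ℝ) + f - a - b + 1))) * hmid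

end ejfin2

/-- the squared `L²`-norm of the exceptional Jacobi polynomials. -/
theorem exceptional_jacobi_norm
    (α β : ℤ) (M : ℕ → ℝ) (F : Finset ℕ)
    (hαβ : α ≤ β) (hβ : β ≤ -1)
    (hM : ∀ i, M i ≠ 0 ∧ M i ≠ 1)
    (hFpos : ∀ f ∈ F, 0 < f)
    (hFc : ∀ k : ℕ, -β ≤ (k : ℤ) → (k : ℤ) ≤ -α - β - 1 → k ∈ F)
    (hΩ : ∀ x ∈ Set.Icc (-1 : ℝ) 1, OmegaJ α β M F x ≠ 0)
    (n : ℕ) (hnF : n ∉ F) :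
    ∫ x in (-1 : ℝ)..1, (exJacobi α β M F (n + uF F) x) ^ 2 * wJ α β M F x =
      (2 : ℝ) ^ (α + β + 1) *
          (if (n : ℤ) ≤ -β - 1 then
              -(1 - M ((-β - 1 - (n : ℤ)).toNat)) ^ 2 / M ((-β - 1 - (n : ℤ)).toNat)
            else 1) *
          (∏ f ∈ F, ((n : ℝ) - (f : ℝ))) *
          (∏ u ∈ UF α β F, ((n : ℝ) + ((u : ℤ) : ℝ) + 1)) *
          (∏ i ∈ Finset.range (-α).toNat, ((n : ℝ) + (α : ℝ) + (β : ℝ) + (i : ℝ) + 1)) /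
        (2 * (n : ℝ) + (α : ℝ) + (β : ℝ) + 1) := by
  obtain ⟨a, rfl⟩ : ∃ a : ℕ, α = -(a:ℤ) := ⟨(-α).toNat, by omega⟩
  obtain ⟨b, rfl⟩ : ∃ b : ℕ, β = -(b:ℤ) := ⟨(-β).toNat, by omega⟩
  have hab : b ≤ a := by omega
  have hb : 1 ≤ b := by omega
  have hFc' : ∀ k, b ≤ k → k < a + b → k ∈ F := fun k h1 h2 => hFc k (by omega) (by omega)
  have haN : a ≤ F.card := by
    have : Finset.Ico b (a+b) ⊆ F := by
      intro k hk
      rw [Finset.mem_Ico] at hk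
      exact hFc' k hk.1 hk.2
    have := Finset.card_le_card this
    rw [Nat.card_Ico] at this
    omega
  have t1 : (- -(a:ℤ)).toNat = a := by omega
  have t2 : (- -(b:ℤ) - 1 - (n:ℤ)).toNat = b - 1 - n := by omega
  have e1 : ∀ i : ℕ, (n:ℝ) + ((-(a:ℤ) : ℤ) : ℝ) + ((-(b:ℤ) : ℤ) : ℝ) + (i:ℝ) + 1 = (n:ℝ) - a - b + i + 1 := by
    intro i; push_cast; ring
  have e2 : 2 * (n:ℝ) + ((-(a:ℤ) : ℤ) : ℝ) + ((-(b:ℤ) : ℤ) : ℝ) + 1 = 2 * (n:ℝ) - a - b + 1 := by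
    push_cast; ring
  simp only [t1, t2, e1]
  rw [e2, zpow_ab]
  by_cases hn : n < b
  · rw [if_pos (by omega)]
    exact ej_case2 a b hb hab M hM F hFpos haN hFc' hΩ n hn
  · have hn' : a + b ≤ n := by
      by_contra h
      exact hnF (hFc' n (by omega) (by omega))
    rw [if_neg (by omega), mul_one]
    exact ej_case1 a b hb hab M F hFpos haN hFc' hΩ n hn'
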